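/- arXiv:1202.1399 — 10 statements merged into one kernel-verified Lean document; each statement's English description precedes it below -/
import Mathlib

section
/- For every real number B > 1, every real s > 0, and all integers J₁, J_L with 1 ≤ J₁ ≤ J_L, the quantity Z_{J_L;J₁}(s) = (∑_{j=J₁}^{J_L} B^{s j}) · (∑_{j=J₁}^{J_L} B^{s j} j² (log B)²) − (∑_{j=J₁}^{J_L} B^{s j} j log B)² satisfies Z_{J_L;J₁}(s) = (B^s log B/(B^s − 1))² · [ (B^s/(B^s − 1)²) · (B^{s J_L} − B^{s(J₁−1)})² − B^{s(J_L + J₁ − 1)} · (J_L − (J₁ − 1))² ]. -/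
/-!
With `x = B ^ s > 1` the three sums are the moments `∑ x ^ j`, `∑ j x ^ j`, `∑ j² x ^ j`
(up to powers of `log B`), and `j ↦ j ^ k * x ^ j` for `k = 0, 1, 2` has an explicit discrete
antiderivative of the form `x ^ (j + 1)` times a polynomial in `j`. Telescoping
(`sum_Icc_int_telescope`) evaluates each moment in terms of `X = x ^ JL` and
`Y = x ^ (J₁ - 1)`; the formula is then a rational identity in `x`, `X`, `Y`, `JL`, `J₁`, in
which the polynomial parts of the `X ^ 2` and `Y ^ 2` coefficients cancel.
-/

open Real Filter

theorem sum_Icc_int_telescope (f F : ℤ → ℝ) (h : ∀ n, F n - F (n - 1) = f n) (a b : ℤ)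
    (hab : a ≤ b) : ∑ j ∈ Finset.Icc a b, f j = F b - F (a - 1) := by
  induction b, hab using Int.le_induction with
  | base => simp [h]
  | succ n hn ih =>
    have e : Finset.Icc a (n + 1) = insert (n + 1) (Finset.Icc a n) := by
      ext k
      simp only [Finset.mem_Icc, Finset.mem_insert]
      omega
    rw [e, Finset.sum_insert (by simp), ih, ← h (n + 1), add_sub_cancel_right]
    ring

theorem Z_closed_form (B s : ℝ) (hB : 1 < B) (hs : 0 < s)
    (J₁ JL : ℤ) (h1 : 1 ≤ J₁) (h2 : J₁ ≤ JL) :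
    (∑ j ∈ Finset.Icc J₁ JL, B ^ (s * (j : ℝ))) *
        (∑ j ∈ Finset.Icc J₁ JL, B ^ (s * (j : ℝ)) * (j : ℝ) ^ 2 * Real.log B ^ 2) -
      (∑ j ∈ Finset.Icc J₁ JL, B ^ (s * (j : ℝ)) * (j : ℝ) * Real.log B) ^ 2 =
      (B ^ s * Real.log B / (B ^ s - 1)) ^ 2 *
        (B ^ s / (B ^ s - 1) ^ 2 * (B ^ (s * (JL : ℝ)) - B ^ (s * ((J₁ : ℝ) - 1))) ^ 2 -
          B ^ (s * ((JL : ℝ) + (J₁ : ℝ) - 1)) * ((JL : ℝ) - ((J₁ : ℝ) - 1)) ^ 2) := by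
  have hB0 : 0 < B := by linarith
  have hx1 : 1 < B ^ s := Real.one_lt_rpow hB hs
  have key : ∀ j : ℤ, B ^ (s * (j : ℝ)) = (B ^ s) ^ j := fun j => by
    rw [Real.rpow_mul hB0.le, Real.rpow_intCast]
  have eY : B ^ (s * ((J₁ : ℝ) - 1)) = (B ^ s) ^ (J₁ - 1) := by
    rw [← key]; push_cast; rfl
  have eXY : B ^ (s * ((JL : ℝ) + (J₁ : ℝ) - 1)) = (B ^ s) ^ JL * (B ^ s) ^ (J₁ - 1) := by
    rw [← key, ← key, ← Real.rpow_add hB0]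
    congr 1
    push_cast
    ring
  rw [eY, eXY]
  simp only [key]
  generalize B ^ s = x at hx1
  have hx0 : x ≠ 0 := by linarith
  have hu : x - 1 ≠ 0 := by linarith
  have hpred : ∀ n : ℤ, x ^ n = x ^ (n - 1) * x := fun n => by
    rw [← zpow_add_one₀ hx0, sub_add_cancel]
  rw [← Finset.sum_mul, ← Finset.sum_mul]
  rw [sum_Icc_int_telescope (fun j => x ^ j) (fun n => x ^ n * x / (x - 1))
      (fun n => by simp only [hpred n]; field_simp) J₁ JL h2,
    sum_Icc_int_telescope (fun j => x ^ j * (j : ℝ) ^ 2)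
      (fun n => x ^ n * x *
        ((n : ℝ) ^ 2 / (x - 1) - 2 * n / (x - 1) ^ 2 + (x + 1) / (x - 1) ^ 3))
      (fun n => by simp only [hpred n]; push_cast; field_simp; ring) J₁ JL h2,
    sum_Icc_int_telescope (fun j => x ^ j * (j : ℝ))
      (fun n => x ^ n * x * ((n : ℝ) / (x - 1) - 1 / (x - 1) ^ 2))
      (fun n => by simp only [hpred n]; push_cast; field_simp; ring) J₁ JL h2]
  -- The identity is rational in the two boundary powers, so they become free variables.
  generalize x ^ JL = X
  generalize x ^ (J₁ - 1) = Y
  push_cast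
  field_simp
  ring
end

section
/- For every real number B > 1 and every real s > 0, defining Z_J(s) = (∑_{j=1}^{J} B^{s j}) · (∑_{j=1}^{J} B^{s j} j² (log B)²) − (∑_{j=1}^{J} B^{s j} j log B)² for integers J ≥ 1, one has lim_{J→∞} B^{−2 s J} Z_J(s) = (log B)² · B^{3s}/(B^s − 1)⁴. -/
/-!
Write `q = B ^ (-s) ∈ (0, 1)` and reverse the order of summation, `j = J - k` with `0 ≤ k < J`. Then
`B ^ (s * j) = B ^ (s * J) * q ^ k`, so the factor `B ^ (-2 * s * J)` removes the growth exactly. The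
quantity `(∑ w) * (∑ w * j ^ 2) - (∑ w * j) ^ 2` is a variance up to normalisation, hence unchanged
when the position `J - k` is replaced by `k`. What is left is
`(log B) ^ 2 * ((∑ q ^ k) * (∑ q ^ k * k ^ 2) - (∑ q ^ k * k) ^ 2)` over `k < J`, and the three
power series sum to `1 / (1 - q)`, `q / (1 - q) ^ 2` and `q * (1 + q) / (1 - q) ^ 3`. The limit is
therefore `(log B) ^ 2 * q / (1 - q) ^ 4`.
-/

open Real Filter Topology

/-- Obtained from `∑ (n + 2).choose 2 * q ^ n = 1 / (1 - q) ^ 3` through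
`n ^ 2 = 2 * (n + 2).choose 2 - 3 * n - 2`. -/
lemma hasSum_geometric_mul_sq {q : ℝ} (hq : ‖q‖ < 1) :
    HasSum (fun n : ℕ => q ^ n * (n : ℝ) ^ 2) (q * (1 + q) / (1 - q) ^ 3) := by
  have h1 : 1 - q ≠ 0 := by
    have := (abs_lt.1 (by simpa using hq : |q| < 1)).2
    linarith
  have h := (((hasSum_choose_mul_geometric_of_norm_lt_one 2 hq).mul_left 2).sub
    ((hasSum_coe_mul_geometric_of_norm_lt_one hq).mul_left 3)).sub
    ((hasSum_geometric_of_norm_lt_one hq).mul_left 2)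
  have hf : (fun n : ℕ => q ^ n * (n : ℝ) ^ 2) = fun n : ℕ =>
      2 * (((n + 2).choose 2 : ℕ) * q ^ n) - 3 * ((n : ℝ) * q ^ n) - 2 * q ^ n := by
    funext n
    rw [Nat.cast_choose_two]
    push_cast
    ring
  have hv : q * (1 + q) / (1 - q) ^ 3 =
      2 * (1 / (1 - q) ^ (2 + 1)) - 3 * (q / (1 - q) ^ 2) - 2 * (1 - q)⁻¹ := by
    field_simp
    ring
  rw [hf, hv]
  exact h

lemma sum_Icc_one_reflect (f : ℕ → ℝ) (J : ℕ) :
    ∑ j ∈ Finset.Icc 1 J, f j = ∑ k ∈ Finset.range J, f (J - k) := by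
  refine Finset.sum_nbij' (fun j => J - j) (fun k => J - k) ?_ ?_ ?_ ?_ ?_
  · intro j hj
    simp only [Finset.mem_Icc, Finset.mem_range] at *
    omega
  · intro k hk
    simp only [Finset.mem_Icc, Finset.mem_range] at *
    omega
  · intro j hj
    simp only [Finset.mem_Icc] at *
    omega
  · intro k hk
    simp only [Finset.mem_range] at *
    omega
  · intro j hj
    simp only [Finset.mem_Icc] at hj
    rw [Nat.sub_sub_self hj.2]

/-- Reversal of the summation order, with `q = B ^ (-s)`. -/
lemma sum_rpow_mul_reflect {B : ℝ} (hB : 0 < B) (s : ℝ) (g : ℝ → ℝ) (J : ℕ) :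
    ∑ j ∈ Finset.Icc 1 J, B ^ (s * (j : ℝ)) * g j =
      B ^ (s * (J : ℝ)) * ∑ k ∈ Finset.range J, (B ^ (-s)) ^ k * g ((J : ℝ) - k) := by
  rw [sum_Icc_one_reflect (fun j : ℕ => B ^ (s * (j : ℝ)) * g j), Finset.mul_sum]
  refine Finset.sum_congr rfl fun k hk => ?_
  rw [Nat.cast_sub (Finset.mem_range.1 hk).le, ← Real.rpow_mul_natCast hB.le, ← mul_assoc,
    ← Real.rpow_add hB]
  congr 2
  ring

/-- The exact form of the normalised `Z_J`: shift invariance of the variance removes `J` from the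
summands. -/
lemma normalized_Z_eq {B : ℝ} (hB : 0 < B) (s : ℝ) (J : ℕ) :
    B ^ (-(2 * s * (J : ℝ))) *
        ((∑ j ∈ Finset.Icc 1 J, B ^ (s * (j : ℝ))) *
            (∑ j ∈ Finset.Icc 1 J, B ^ (s * (j : ℝ)) * (j : ℝ) ^ 2 * Real.log B ^ 2) -
          (∑ j ∈ Finset.Icc 1 J, B ^ (s * (j : ℝ)) * (j : ℝ) * Real.log B) ^ 2) =
      Real.log B ^ 2 *
        ((∑ k ∈ Finset.range J, (B ^ (-s)) ^ k) *
            (∑ k ∈ Finset.range J, (B ^ (-s)) ^ k * (k : ℝ) ^ 2) -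
          (∑ k ∈ Finset.range J, (k : ℝ) * (B ^ (-s)) ^ k) ^ 2) := by
  have h0 := sum_rpow_mul_reflect hB s (fun _ => 1) J
  have h1 := sum_rpow_mul_reflect hB s (fun x => x) J
  have h2 := sum_rpow_mul_reflect hB s (fun x => x ^ 2) J
  simp only [mul_one] at h0
  rw [← Finset.sum_mul, ← Finset.sum_mul, h0, h1, h2]
  generalize B ^ (-s) = q
  have e1 : ∑ k ∈ Finset.range J, q ^ k * ((J : ℝ) - k) =
      J * ∑ k ∈ Finset.range J, q ^ k - ∑ k ∈ Finset.range J, (k : ℝ) * q ^ k := by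
    rw [Finset.mul_sum, ← Finset.sum_sub_distrib]
    exact Finset.sum_congr rfl fun k _ => by ring
  have e2 : ∑ k ∈ Finset.range J, q ^ k * ((J : ℝ) - k) ^ 2 =
      (J : ℝ) ^ 2 * ∑ k ∈ Finset.range J, q ^ k -
        2 * J * ∑ k ∈ Finset.range J, (k : ℝ) * q ^ k +
        ∑ k ∈ Finset.range J, q ^ k * (k : ℝ) ^ 2 := by
    rw [Finset.mul_sum, Finset.mul_sum, ← Finset.sum_sub_distrib, ← Finset.sum_add_distrib]
    exact Finset.sum_congr rfl fun k _ => by ring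
  have hA : B ^ (-(2 * s * (J : ℝ))) * (B ^ (s * (J : ℝ))) ^ 2 = 1 := by
    rw [← Real.rpow_mul_natCast hB.le, ← Real.rpow_add hB, ← Real.rpow_zero B]
    congr 1
    push_cast
    ring
  rw [e1, e2]
  linear_combination (Real.log B ^ 2 *
    ((∑ k ∈ Finset.range J, q ^ k) * (∑ k ∈ Finset.range J, q ^ k * (k : ℝ) ^ 2) -
      (∑ k ∈ Finset.range J, (k : ℝ) * q ^ k) ^ 2)) * hA

theorem Z_limit (B s : ℝ) (hB : 1 < B) (hs : 0 < s) :
    Tendsto (fun J : ℕ =>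
      B ^ (-(2 * s * (J : ℝ))) *
        ((∑ j ∈ Finset.Icc 1 J, B ^ (s * (j : ℝ))) *
            (∑ j ∈ Finset.Icc 1 J, B ^ (s * (j : ℝ)) * (j : ℝ) ^ 2 * Real.log B ^ 2) -
          (∑ j ∈ Finset.Icc 1 J, B ^ (s * (j : ℝ)) * (j : ℝ) * Real.log B) ^ 2))
      atTop (𝓝 (Real.log B ^ 2 * B ^ (3 * s) / (B ^ s - 1) ^ 4)) := by
  have hB0 : 0 < B := by linarith
  have hx : 1 < B ^ s := Real.one_lt_rpow hB hs
  have hq : ‖B ^ (-s)‖ < 1 := by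
    rw [Real.norm_of_nonneg (Real.rpow_nonneg hB0.le _)]
    exact Real.rpow_lt_one_of_one_lt_of_neg hB (by linarith)
  simp only [normalized_Z_eq hB0]
  have h := (((hasSum_geometric_of_norm_lt_one hq).tendsto_sum_nat.mul
    (hasSum_geometric_mul_sq hq).tendsto_sum_nat).sub
    ((hasSum_coe_mul_geometric_of_norm_lt_one hq).tendsto_sum_nat.pow 2)).const_mul
    (Real.log B ^ 2)
  convert h using 2
  have h3 : B ^ (3 * s) = (B ^ s) ^ 3 := by
    rw [← Real.rpow_mul_natCast hB0.le]
    congr 1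
    push_cast
    ring
  rw [h3, Real.rpow_neg hB0.le]
  generalize B ^ s = x at hx
  have hx0 : x ≠ 0 := by linarith
  have hx1 : x - 1 ≠ 0 := by linarith
  have e : 1 - x⁻¹ = (x - 1) / x := by field_simp
  rw [e]
  field_simp
  ring
end

section
/- Assume in addition that b(x₀) ≠ 0 for some x₀ ∈ (B⁻¹, B). Then for all real numbers α and α₀, one has lim_{j→∞} B^{j(α₀ − α)} · K_j(α₀)/K_j(α) = I₀(B,α₀)/I₀(B,α), the limit being taken along the positive integers j. -/
/-!
Put `N = B ^ j`. Substituting `l = N u` in the sum gives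
`N ^ α * K_j(α) = N⁻¹ ∑ 2 b(u)² u^(1-α) + N⁻¹ * (N⁻¹ ∑ b(u)² u^(-α))`, the sums running over the
points `u = l / N`. Both are Riemann sums of mesh `1 / N` for continuous functions with compact
support in `(0, ∞)`, so they converge to the corresponding integrals (`tendsto_riemann_sum_pnat`)
and `N ^ α * K_j(α) → I₀(B, α)` (`tendsto_scaled_Kfun`). Since `b² u^(1-α)` is nonnegative,
continuous and not identically zero, `I₀(B, α) > 0`, and the claim follows by taking the quotient
of the limits for `α₀` and `α`.
-/

open Real Filter Topology

/-- `K_j(α) = B^{-2j} ∑_{l=1}^∞ b(l/B^j)² (2l+1) l^{-α}`. -/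
noncomputable def Kfun (B : ℝ) (b : ℝ → ℝ) (j : ℕ) (α : ℝ) : ℝ :=
  B ^ (-(2 * (j : ℝ))) *
    ∑' l : ℕ+, (b ((l : ℝ) / B ^ (j : ℕ))) ^ 2 * (2 * (l : ℝ) + 1) * (l : ℝ) ^ (-α)

/-- `I₀(B,α) = 2 ∫_{B⁻¹}^B b(u)² u^{1-α} du`. -/
noncomputable def Ifun0 (B : ℝ) (b : ℝ → ℝ) (α : ℝ) : ℝ :=
  2 * ∫ u in B⁻¹..B, (b u) ^ 2 * u ^ (1 - α)

/-- If `f` is continuous with support in `(a, A)`, `0 ≤ a`, its Riemann sums over the points `l / N`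
with `l ≥ 1` converge to its integral as the real parameter `N` tends to infinity. -/
lemma tendsto_riemann_sum_pnat {f : ℝ → ℝ} (hf : Continuous f) {a A : ℝ} (ha : 0 ≤ a)
    (haA : a < A) (hs : Function.support f ⊆ Set.Ioo a A) :
    Tendsto (fun N : ℝ => N⁻¹ * ∑' l : ℕ+, f ((l : ℝ) / N)) atTop
      (𝓝 (∫ u in a..A, f u)) := by
  have hzero : ∀ x, A ≤ x → f x = 0 := fun x hx => by
    by_contra h
    exact absurd (hs h).2 (not_lt.2 hx)
  have huc : UniformContinuous f :=
    HasCompactSupport.uniformContinuous_of_continuous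
      (HasCompactSupport.intro isCompact_Icc fun x hx => by
        by_contra h
        exact hx (Set.Ioo_subset_Icc_self (hs h))) hf
  have hA : 0 < A := ha.trans_lt haA
  rw [Metric.tendsto_atTop]
  intro ε hε
  have hε' : 0 < ε / (2 * (A + 1)) := by positivity
  obtain ⟨δ, hδ, hfδ⟩ := Metric.uniformContinuous_iff.1 huc _ hε'
  refine ⟨max 1 (2 / δ), fun N hN => ?_⟩
  have hN1 : 1 ≤ N := (le_max_left _ _).trans hN
  have hN0 : 0 < N := by linarith
  have hNδ : N⁻¹ < δ := by
    have h2 : 2 / δ ≤ N := (le_max_right _ _).trans hN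
    rw [div_le_iff₀ hδ] at h2
    rw [inv_lt_iff_one_lt_mul₀ hN0]
    nlinarith
  set M : ℕ := ⌈A * N⌉₊ with hM
  have hMA : A ≤ M / N := by
    rw [le_div_iff₀ hN0]; exact Nat.le_ceil _
  have hMA' : (M : ℝ) * N⁻¹ ≤ A + 1 := by
    have h1 : (M : ℝ) < A * N + 1 := Nat.ceil_lt_add_one (by positivity)
    rw [← div_eq_mul_inv, div_le_iff₀ hN0]
    nlinarith
  have hsum : ∑' l : ℕ+, f ((l : ℝ) / N) = ∑ i ∈ Finset.range M, f (((i + 1 : ℕ) : ℝ) / N) := by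
    rw [tsum_pnat_eq_tsum_succ (f := fun n : ℕ => f ((n : ℝ) / N))]
    refine tsum_eq_sum fun i hi => hzero _ (hMA.trans ?_)
    rw [Finset.mem_range, not_lt] at hi
    gcongr
    omega
  have hint : ∫ u in a..A, f u
      = ∑ i ∈ Finset.range M, ∫ u in ((i : ℕ) : ℝ) / N..((i + 1 : ℕ) : ℝ) / N, f u := by
    rw [intervalIntegral.sum_integral_adjacent_intervals (a := fun i : ℕ => (i : ℝ) / N)
      (fun k _ => hf.intervalIntegrable _ _),
      intervalIntegral.integral_eq_integral_of_support_subset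
        (hs.trans Set.Ioo_subset_Ioc_self),
      intervalIntegral.integral_eq_integral_of_support_subset]
    intro x hx
    have := hs hx
    simp only [Nat.cast_zero, zero_div]
    exact ⟨ha.trans_lt this.1, this.2.le.trans hMA⟩
  rw [dist_eq_norm, hsum, hint, Finset.mul_sum, ← Finset.sum_sub_distrib]
  have hterm : ∀ i ∈ Finset.range M, ‖N⁻¹ * f (((i + 1 : ℕ) : ℝ) / N)
      - ∫ u in ((i : ℕ) : ℝ) / N..((i + 1 : ℕ) : ℝ) / N, f u‖ ≤ ε / (2 * (A + 1)) * N⁻¹ := by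
    intro i _
    have hlen : ((i + 1 : ℕ) : ℝ) / N - (i : ℝ) / N = N⁻¹ := by
      push_cast; field_simp; ring
    have hle : (i : ℝ) / N ≤ ((i + 1 : ℕ) : ℝ) / N := by
      have := inv_pos.2 hN0
      linarith
    have hc : N⁻¹ * f (((i + 1 : ℕ) : ℝ) / N)
        = ∫ _u in ((i : ℕ) : ℝ) / N..((i + 1 : ℕ) : ℝ) / N, f (((i + 1 : ℕ) : ℝ) / N) := by
      rw [intervalIntegral.integral_const, hlen, smul_eq_mul]
    rw [hc, ← intervalIntegral.integral_sub (by simp) (hf.intervalIntegrable _ _)]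
    refine (intervalIntegral.norm_integral_le_of_norm_le_const
      (C := ε / (2 * (A + 1))) fun x hx => ?_).trans_eq ?_
    · rw [Set.uIoc_of_le hle] at hx
      rw [← dist_eq_norm]
      refine (hfδ ?_).le
      rw [Real.dist_eq, abs_of_nonneg (by linarith [hx.2])]
      linarith [hx.1]
    · rw [hlen, abs_of_pos (inv_pos.2 hN0)]
  calc _ ≤ ∑ i ∈ Finset.range M, ε / (2 * (A + 1)) * N⁻¹ := norm_sum_le_of_le _ hterm
    _ = ε / (2 * (A + 1)) * (M * N⁻¹) := by
      rw [Finset.sum_const, Finset.card_range, nsmul_eq_mul]; ring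
    _ ≤ ε / (2 * (A + 1)) * (A + 1) := by gcongr
    _ = ε / 2 := by field_simp
    _ < ε := by linarith

lemma support_subset_Ioo {B : ℝ} {b : ℝ → ℝ} (hb : Continuous b)
    (hsupp : Function.support b ⊆ Set.Icc B⁻¹ B) : Function.support b ⊆ Set.Ioo B⁻¹ B := by
  rw [← interior_Icc]
  exact hb.isOpen_support.subset_interior_iff.2 hsupp

lemma support_sq_mul_rpow_subset {B : ℝ} {b : ℝ → ℝ} (hb : Continuous b)
    (hsupp : Function.support b ⊆ Set.Icc B⁻¹ B) (p : ℝ) :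
    Function.support (fun u => b u ^ 2 * u ^ p) ⊆ Set.Ioo B⁻¹ B := by
  intro x hx
  refine support_subset_Ioo hb hsupp fun h => hx ?_
  simp [h]

/-- The possible singularity of `u ^ p` at the origin is harmless, since `b` vanishes on
`(-∞, B⁻¹)`. -/
lemma continuous_sq_mul_rpow {B : ℝ} (hB : 1 < B) {b : ℝ → ℝ} (hb : Continuous b)
    (hsupp : Function.support b ⊆ Set.Icc B⁻¹ B) (p : ℝ) :
    Continuous (fun u => b u ^ 2 * u ^ p) := by
  rw [continuous_iff_continuousAt]
  intro x
  rcases lt_or_ge x B⁻¹ with hx | hx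
  · have : (fun _ => (0 : ℝ)) =ᶠ[𝓝 x] fun u => b u ^ 2 * u ^ p := by
      filter_upwards [Iio_mem_nhds hx] with u hu
      have : b u = 0 := by
        by_contra h
        exact absurd (hsupp h).1 (not_le.2 hu)
      simp [this]
    exact continuousAt_const.congr this
  · have hx0 : 0 < x := (inv_pos.2 (by linarith)).trans_le hx
    exact (hb.continuousAt.pow 2).mul (Real.continuousAt_rpow_const _ _ (Or.inl hx0.ne'))

/-- A sum over `l ≥ 1` of values at `l / N` of a function of bounded support is finite. -/
lemma summable_pnat_div {f : ℝ → ℝ} {a A : ℝ} (hs : Function.support f ⊆ Set.Ioo a A)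
    {N : ℝ} (hN : 0 < N) : Summable fun l : ℕ+ => f ((l : ℝ) / N) := by
  refine summable_of_hasFiniteSupport ((Set.finite_Iic (⌈A * N⌉₊.succPNat)).subset fun l hl => ?_)
  have h := (hs hl).2
  rw [div_lt_iff₀ hN] at h
  have h2 : (l : ℕ) ≤ ⌈A * N⌉₊ := by exact_mod_cast h.le.trans (Nat.le_ceil _)
  rw [Set.mem_Iic, ← PNat.coe_le_coe, Nat.succPNat_coe]
  omega

lemma scaled_Kfun_eq {B : ℝ} (hB : 1 < B) {b : ℝ → ℝ} (hb : Continuous b)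
    (hsupp : Function.support b ⊆ Set.Icc B⁻¹ B) (α : ℝ) (j : ℕ) :
    (B ^ j) ^ α * Kfun B b j α
      = 2 * ((B ^ j)⁻¹ * ∑' l : ℕ+, b ((l : ℝ) / B ^ j) ^ 2 * ((l : ℝ) / B ^ j) ^ (1 - α))
        + (B ^ j)⁻¹ *
          ((B ^ j)⁻¹ * ∑' l : ℕ+, b ((l : ℝ) / B ^ j) ^ 2 * ((l : ℝ) / B ^ j) ^ (-α)) := by
  have hB0 : 0 < B := by linarith
  have hpow : B ^ (-(2 * (j : ℝ))) = (B ^ j)⁻¹ * (B ^ j)⁻¹ := by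
    rw [Real.rpow_neg hB0.le, two_mul, Real.rpow_add hB0, Real.rpow_natCast, mul_inv]
  have hN : 0 < B ^ j := by positivity
  unfold Kfun
  rw [hpow]
  generalize B ^ j = N at hN ⊢
  have h1 := summable_pnat_div (support_sq_mul_rpow_subset hb hsupp (1 - α)) hN
  have h2 := summable_pnat_div (support_sq_mul_rpow_subset hb hsupp (-α)) hN
  simp only [← tsum_mul_left]
  rw [← Summable.tsum_add ((h1.mul_left _).mul_left _) ((h2.mul_left _).mul_left _)]
  refine tsum_congr fun l => ?_
  have hl : (0 : ℝ) < l := by exact_mod_cast l.pos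
  have hu : 0 < (l : ℝ) / N := by positivity
  rw [sub_eq_add_neg, Real.rpow_add hu, Real.rpow_one, Real.div_rpow hl.le hN.le,
    Real.rpow_neg hN.le]
  have : 0 < N ^ α := by positivity
  field_simp

lemma tendsto_scaled_Kfun {B : ℝ} (hB : 1 < B) {b : ℝ → ℝ} (hb : Continuous b)
    (hsupp : Function.support b ⊆ Set.Icc B⁻¹ B) (α : ℝ) :
    Tendsto (fun j : ℕ => (B ^ j) ^ α * Kfun B b j α) atTop (𝓝 (Ifun0 B b α)) := by
  have hpos : 0 ≤ B⁻¹ := inv_nonneg.2 (by linarith)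
  have hlt : B⁻¹ < B := (inv_lt_one_of_one_lt₀ hB).trans hB
  have hR : ∀ p : ℝ, Tendsto (fun j : ℕ => (B ^ j)⁻¹ *
      ∑' l : ℕ+, b ((l : ℝ) / B ^ j) ^ 2 * ((l : ℝ) / B ^ j) ^ p) atTop
      (𝓝 (∫ u in B⁻¹..B, b u ^ 2 * u ^ p)) := fun p =>
    (tendsto_riemann_sum_pnat (continuous_sq_mul_rpow hB hb hsupp p) hpos hlt
      (support_sq_mul_rpow_subset hb hsupp p)).comp (tendsto_pow_atTop_atTop_of_one_lt hB)
  have hinv : Tendsto (fun j : ℕ => (B ^ j)⁻¹) atTop (𝓝 0) :=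
    tendsto_inv_atTop_zero.comp (tendsto_pow_atTop_atTop_of_one_lt hB)
  simp only [scaled_Kfun_eq hB hb hsupp]
  have := ((hR (1 - α)).const_mul 2).add (hinv.mul (hR (-α)))
  rwa [zero_mul, add_zero] at this

lemma Ifun0_pos {B : ℝ} (hB : 1 < B) {b : ℝ → ℝ} (hb : Continuous b)
    (hsupp : Function.support b ⊆ Set.Icc B⁻¹ B)
    (hne : ∃ x₀ ∈ Set.Ioo B⁻¹ B, b x₀ ≠ 0) (α : ℝ) : 0 < Ifun0 B b α := by
  obtain ⟨x₀, hx₀, hbx⟩ := hne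
  have hpos : 0 < B⁻¹ := inv_pos.2 (by linarith)
  refine mul_pos two_pos (intervalIntegral.integral_pos (hx₀.1.trans hx₀.2)
    (continuous_sq_mul_rpow hB hb hsupp _).continuousOn (fun x hx => ?_)
    ⟨x₀, Set.Ioo_subset_Icc_self hx₀, ?_⟩)
  · have : 0 < x := hpos.trans hx.1
    positivity
  · have : 0 < x₀ := hpos.trans hx₀.1
    positivity

theorem Kfun_ratio_limit (B : ℝ) (hB : 1 < B) (b : ℝ → ℝ) (hb : Continuous b)
    (hsupp : Function.support b ⊆ Set.Icc B⁻¹ B)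
    (hne : ∃ x₀ ∈ Set.Ioo B⁻¹ B, b x₀ ≠ 0) (α α₀ : ℝ) :
    Tendsto (fun j : ℕ => B ^ ((α₀ - α) * (j : ℝ)) * (Kfun B b j α₀ / Kfun B b j α))
      atTop (𝓝 (Ifun0 B b α₀ / Ifun0 B b α)) := by
  refine ((tendsto_scaled_Kfun hB hb hsupp α₀).div (tendsto_scaled_Kfun hB hb hsupp α)
    (Ifun0_pos hB hb hsupp hne α).ne').congr fun j => ?_
  have hB0 : 0 < B := by linarith
  have hN : 0 < B ^ j := by positivity
  rw [mul_comm (α₀ - α), Real.rpow_mul hB0.le, Real.rpow_natCast, Real.rpow_sub hN,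
    Pi.div_apply, mul_div_mul_comm]
end

section
/- For every real number α, one has lim_{j→∞} B^{α j} · ( K_{j,1}(α) + K_j(α) · j log B ) = − I₁(B,α), the limit being taken along the positive integers j. -/
/-!
Put `N = B ^ j` and `u = l / N`. Then `log l - j log B = log u`, and the quantity under the limit is
`-(2 * S_N(g) + N⁻¹ * S_N(h))`, where `g u = b(u)² u^(1-α) log u`, `h u = b(u)² u^(-α) log u` and
`S_N(f) = N⁻¹ ∑_{l ≥ 1} f(l / N)` is the Riemann sum of mesh `N⁻¹` (`normalized_eq`). The functions
`g` and `h` are continuous on all of `ℝ`, since `b` vanishes near the singularity at `0`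
(`continuous_weight`), so the Riemann sums converge to the integrals (`tendsto_riemann_sum`); the
factor `N⁻¹` kills the `h` term.
-/

open Real Filter Topology

/-- `K_{j,1}(α) = -B^{-2j} ∑_{l=1}^∞ b(l/B^j)² (2l+1) l^{-α} log l`. -/
noncomputable def Kfun1 (B : ℝ) (b : ℝ → ℝ) (j : ℕ) (α : ℝ) : ℝ :=
  -(B ^ (-(2 * (j : ℝ))) *
    ∑' l : ℕ+, (b ((l : ℝ) / B ^ (j : ℕ))) ^ 2 * (2 * (l : ℝ) + 1) * (l : ℝ) ^ (-α) *
      Real.log (l : ℝ))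

/-- `I₁(B,α) = 2 ∫_{B⁻¹}^B b(u)² u^{1-α} log u du`. -/
noncomputable def Ifun1 (B : ℝ) (b : ℝ → ℝ) (α : ℝ) : ℝ :=
  2 * ∫ u in B⁻¹..B, (b u) ^ 2 * u ^ (1 - α) * Real.log u

/-- The support of a continuous function is open, so if it lies in `[a, c]` then it lies in
`(a, c)`. -/
lemma support_subset_Ioo_s7 {f : ℝ → ℝ} (hf : Continuous f) {a c : ℝ}
    (hs : Function.support f ⊆ Set.Icc a c) : Function.support f ⊆ Set.Ioo a c := by
  rw [← interior_Icc]
  exact interior_maximal hs hf.isOpen_support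

/-- Riemann sums over the positive integers converge, by uniform continuity. -/
lemma tendsto_riemann_sum {f : ℝ → ℝ} (hf : Continuous f) {a c : ℝ} (ha : 0 < a) (hac : a ≤ c)
    (hs : Function.support f ⊆ Set.Icc a c) :
    Tendsto (fun N : ℝ => N⁻¹ * ∑' l : ℕ+, f ((l : ℝ) / N)) atTop (𝓝 (∫ u in a..c, f u)) := by
  have hcs : HasCompactSupport f := HasCompactSupport.intro isCompact_Icc
    (fun x hx => by by_contra h; exact hx (hs h))
  have huc : UniformContinuous f := hcs.uniformContinuous_of_continuous hf
  have hc : 0 < c := ha.trans_le hac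
  rw [Metric.tendsto_atTop]
  intro ε hε
  obtain ⟨δ, hδ, hfδ⟩ := Metric.uniformContinuous_iff.1 huc (ε / (2 * (c + 1))) (by positivity)
  refine ⟨max 1 (2 / δ), fun N hN => ?_⟩
  have hN1 : 1 ≤ N := (le_max_left _ _).trans hN
  have hN0 : 0 < N := by linarith
  have hNδ : N⁻¹ < δ := by
    have h2 : 2 / δ ≤ N := (le_max_right _ _).trans hN
    rw [div_le_iff₀ hδ] at h2
    rw [inv_lt_iff_one_lt_mul₀ hN0]
    nlinarith
  -- Only the indices `l ≤ m` contribute, and `[0, m / N]` covers the support.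
  set m := ⌈c * N⌉₊ with hm
  have hm1 : c ≤ m / N := by
    rw [le_div_iff₀ hN0]; exact Nat.le_ceil _
  have hm2 : m / N ≤ c + 1 := by
    rw [div_le_iff₀ hN0]
    have := (Nat.ceil_lt_add_one (a := c * N) (by positivity)).le
    linarith
  have hsum : ∑' l : ℕ+, f ((l : ℝ) / N) = ∑ k ∈ Finset.range m, f (((k + 1 : ℕ) : ℝ) / N) := by
    rw [tsum_pnat_eq_tsum_succ (f := fun n : ℕ => f ((n : ℝ) / N))]
    refine tsum_eq_sum fun k hk => ?_
    by_contra h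
    have h1 := (hs h).2
    have h2 : (m : ℝ) ≤ k := by exact_mod_cast not_lt.1 (fun h => hk (Finset.mem_range.2 h))
    rw [div_le_iff₀ hN0] at h1
    rw [le_div_iff₀ hN0] at hm1
    push_cast at h1
    linarith
  have hint : ∫ u in a..c, f u = ∫ u in (((0 : ℕ) : ℝ) / N)..((m : ℝ) / N), f u := by
    have hsup := support_subset_Ioo_s7 hf hs
    rw [intervalIntegral.integral_eq_integral_of_support_subset
        (hsup.trans Set.Ioo_subset_Ioc_self),
      intervalIntegral.integral_eq_integral_of_support_subset]
    intro x hx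
    have := hsup hx
    simp only [Nat.cast_zero, zero_div]
    exact ⟨ha.trans this.1, this.2.le.trans hm1⟩
  have hii : ∀ p q : ℝ, IntervalIntegrable f MeasureTheory.volume p q :=
    fun p q => hf.intervalIntegrable p q
  rw [hsum, hint, ← intervalIntegral.sum_integral_adjacent_intervals
    (a := fun k : ℕ => (k : ℝ) / N) (fun k _ => hii _ _), Finset.mul_sum, dist_eq_norm,
    ← Finset.sum_sub_distrib]
  have hterm : ∀ k ∈ Finset.range m, ‖N⁻¹ * f (((k + 1 : ℕ) : ℝ) / N)
      - ∫ u in ((k : ℝ) / N)..(((k + 1 : ℕ) : ℝ) / N), f u‖ ≤ ε / (2 * (c + 1)) * N⁻¹ := by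
    intro k _
    have hlen : ((k + 1 : ℕ) : ℝ) / N - (k : ℝ) / N = N⁻¹ := by
      push_cast; field_simp; ring
    have hle : (k : ℝ) / N ≤ ((k + 1 : ℕ) : ℝ) / N := by
      have : 0 < N⁻¹ := by positivity
      linarith
    have hconst : N⁻¹ * f (((k + 1 : ℕ) : ℝ) / N)
        = ∫ _u in ((k : ℝ) / N)..(((k + 1 : ℕ) : ℝ) / N), f (((k + 1 : ℕ) : ℝ) / N) := by
      rw [intervalIntegral.integral_const, hlen, smul_eq_mul]
    rw [hconst, ← intervalIntegral.integral_sub (by simp) (hii _ _)]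
    refine (intervalIntegral.norm_integral_le_of_norm_le_const
      (C := ε / (2 * (c + 1))) ?_).trans_eq ?_
    · intro x hx
      rw [Set.uIoc_of_le hle] at hx
      rw [← dist_eq_norm]
      refine (hfδ ?_).le
      rw [Real.dist_eq, abs_of_nonneg (by linarith [hx.2])]
      linarith [hx.1]
    · rw [hlen, abs_of_pos (by positivity)]
  calc _ ≤ ∑ k ∈ Finset.range m, ε / (2 * (c + 1)) * N⁻¹ := norm_sum_le_of_le _ hterm
    _ = ε / (2 * (c + 1)) * (m / N) := by
      rw [Finset.sum_const, Finset.card_range, nsmul_eq_mul]; ring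
    _ ≤ ε / (2 * (c + 1)) * (c + 1) := by gcongr
    _ = ε / 2 := by field_simp
    _ < ε := by linarith

/-- Continuity holds at `0` too, where `u ^ β * log u` may be singular, because `b` vanishes
in a neighbourhood of `0`. -/
lemma continuous_weight {b : ℝ → ℝ} (hb : Continuous b) {a c : ℝ} (ha : 0 < a)
    (hs : Function.support b ⊆ Set.Icc a c) (β : ℝ) :
    Continuous fun u : ℝ => b u ^ 2 * u ^ β * Real.log u := by
  rw [continuous_iff_continuousAt]
  intro x
  rcases lt_or_ge x a with hx | hx
  · have : (fun u : ℝ => b u ^ 2 * u ^ β * Real.log u) =ᶠ[𝓝 x] fun _ => 0 := by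
      filter_upwards [Iio_mem_nhds hx] with u hu
      have : b u = 0 := by
        by_contra h
        exact absurd (hs h).1 (not_le.2 hu)
      simp [this]
    exact continuousAt_const.congr this.symm
  · have hx0 : x ≠ 0 := (ha.trans_le hx).ne'
    exact ((hb.continuousAt.pow 2).mul (continuousAt_id.rpow_const (Or.inl hx0))).mul
      (Real.continuousAt_log hx0)

lemma support_weight {b : ℝ → ℝ} {s : Set ℝ} (hs : Function.support b ⊆ s) (β : ℝ) :
    Function.support (fun u : ℝ => b u ^ 2 * u ^ β * Real.log u) ⊆ s := by
  intro x hx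
  refine hs fun h => hx ?_
  simp [h]

/-- The series in `Kfun` and `Kfun1` have finitely many nonzero terms. -/
lemma summable_weight {b : ℝ → ℝ} {a c : ℝ} (hs : Function.support b ⊆ Set.Icc a c)
    {N : ℝ} (hN : 0 < N) (F : ℕ+ → ℝ) : Summable fun l : ℕ+ => b ((l : ℝ) / N) ^ 2 * F l := by
  refine summable_of_hasFiniteSupport ?_
  have hfin : ((fun l : ℕ+ => (l : ℕ)) ⁻¹' Set.Iic ⌈c * N⌉₊).Finite :=
    (Set.finite_Iic _).preimage PNat.coe_injective.injOn
  refine hfin.subset fun l hl => ?_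
  have h : b ((l : ℝ) / N) ≠ 0 := fun h => hl (by simp [h])
  have h1 := (hs h).2
  rw [div_le_iff₀ hN] at h1
  exact_mod_cast h1.trans (Nat.le_ceil _)

/-- The substitution `u = l / B ^ j`, which turns the normalized quantity into Riemann sums. -/
lemma normalized_eq {B : ℝ} (hB : 0 < B) {b : ℝ → ℝ} {a c : ℝ}
    (hs : Function.support b ⊆ Set.Icc a c) (α : ℝ) (j : ℕ) :
    B ^ (α * (j : ℝ)) * (Kfun1 B b j α + Kfun B b j α * ((j : ℝ) * Real.log B)) =
      -(2 * ((B ^ j)⁻¹ * ∑' l : ℕ+, b ((l : ℝ) / B ^ j) ^ 2 * ((l : ℝ) / B ^ j) ^ (1 - α) *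
          Real.log ((l : ℝ) / B ^ j))
        + (B ^ j)⁻¹ * ((B ^ j)⁻¹ * ∑' l : ℕ+, b ((l : ℝ) / B ^ j) ^ 2 *
          ((l : ℝ) / B ^ j) ^ (-α) * Real.log ((l : ℝ) / B ^ j))) := by
  have hpow : B ^ (α * (j : ℝ)) = (B ^ j) ^ α := by
    rw [mul_comm, Real.rpow_mul hB.le, Real.rpow_natCast]
  have hpow2 : B ^ (-(2 * (j : ℝ))) = (B ^ j)⁻¹ * (B ^ j)⁻¹ := by
    rw [Real.rpow_neg hB.le, ← mul_inv, two_mul, Real.rpow_add hB, Real.rpow_natCast]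
  have hlog : (j : ℝ) * Real.log B = Real.log (B ^ j) := by simp
  unfold Kfun Kfun1
  rw [hpow, hpow2, hlog]
  have hN : 0 < B ^ j := by positivity
  generalize B ^ j = N at hN ⊢
  have hS := fun F : ℕ+ → ℝ => summable_weight hs hN F
  have s1 := hS fun l => (2 * (l : ℝ) + 1) * (l : ℝ) ^ (-α) * Real.log l
  have s2 := hS fun l => (2 * (l : ℝ) + 1) * (l : ℝ) ^ (-α)
  have s3 := hS fun l => ((l : ℝ) / N) ^ (1 - α) * Real.log ((l : ℝ) / N)
  have s4 := hS fun l => ((l : ℝ) / N) ^ (-α) * Real.log ((l : ℝ) / N)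
  simp only [← mul_assoc] at s1 s2 s3 s4
  have key : N ^ α * (∑' l : ℕ+, b ((l : ℝ) / N) ^ 2 * (2 * (l : ℝ) + 1) * (l : ℝ) ^ (-α) *
        Real.log l - (∑' l : ℕ+, b ((l : ℝ) / N) ^ 2 * (2 * (l : ℝ) + 1) * (l : ℝ) ^ (-α)) *
        Real.log N) =
      2 * N * (∑' l : ℕ+, b ((l : ℝ) / N) ^ 2 * ((l : ℝ) / N) ^ (1 - α) *
        Real.log ((l : ℝ) / N)) + ∑' l : ℕ+, b ((l : ℝ) / N) ^ 2 * ((l : ℝ) / N) ^ (-α) *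
        Real.log ((l : ℝ) / N) := by
    rw [← tsum_mul_right, ← s1.tsum_sub (s2.mul_right _), ← tsum_mul_left, ← tsum_mul_left,
      ← (s3.mul_left _).tsum_add s4]
    refine tsum_congr fun l => ?_
    have hl : (0 : ℝ) < l := by exact_mod_cast l.pos
    have e1 : ((l : ℝ) / N) ^ (1 - α) = (l : ℝ) / N * ((l : ℝ) / N) ^ (-α) := by
      rw [sub_eq_add_neg, Real.rpow_add (by positivity), Real.rpow_one]
    have e2 : ((l : ℝ) / N) ^ (-α) = (l : ℝ) ^ (-α) * N ^ α := by
      rw [Real.div_rpow hl.le hN.le, Real.rpow_neg hN.le α, div_inv_eq_mul]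
    rw [e1, e2, Real.log_div hl.ne' hN.ne']
    field_simp
  have key2 := congrArg (fun x => -(N⁻¹ * N⁻¹ * x)) key
  convert key2 using 1
  · ring
  · field_simp

theorem Kfun1_limit (B : ℝ) (hB : 1 < B) (b : ℝ → ℝ) (hb : Continuous b)
    (hsupp : Function.support b ⊆ Set.Icc B⁻¹ B) (α : ℝ) :
    Tendsto (fun j : ℕ =>
      B ^ (α * (j : ℝ)) * (Kfun1 B b j α + Kfun B b j α * ((j : ℝ) * Real.log B)))
      atTop (𝓝 (-Ifun1 B b α)) := by
  have hB0 : 0 < B := by linarith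
  have hBi : 0 < B⁻¹ := inv_pos.2 hB0
  have hle : B⁻¹ ≤ B := (inv_le_one_of_one_le₀ hB.le).trans hB.le
  have hN : Tendsto (fun j : ℕ => B ^ j) atTop atTop := tendsto_pow_atTop_atTop_of_one_lt hB
  have hR := fun β : ℝ => (tendsto_riemann_sum (continuous_weight hb hBi hsupp β) hBi hle
    (support_weight hsupp β)).comp hN
  simp only [normalized_eq hB0 hsupp α]
  have h := (((hR (1 - α)).const_mul 2).add
    ((tendsto_inv_atTop_zero.comp hN).mul (hR (-α)))).neg
  rw [zero_mul, add_zero] at h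
  exact h
end

section
/- Assume in addition that b(x₀) ≠ 0 for some x₀ ∈ (B⁻¹, B). Then for every real number α, one has lim_{j→∞} ( 2 (K_{j,1}(α)/K_j(α))² − K_{j,2}(α)/K_j(α) ) / (j log B)² = 1, the limit being taken along the positive integers j. -/
/-!
For `l` in the support of `l ↦ b (l / B ^ j)` one has `B ^ (j - 1) ≤ l ≤ B ^ (j + 1)`, so
`log l` lies within `log B` of `j log B`. Hence `-K_{j,1} / K_j` and `K_{j,2} / K_j`, being averages
of `log l` and `(log l)²` against the nonnegative weights `b (l / B ^ j)² (2 l + 1) l ^ (-α)`, are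
asymptotic to `j log B` and `(j log B)²` (`weighted_mean_mem`), and the limit is `2 · 1² - 1 = 1`.
The averages make sense for large `j`: the points `l / B ^ j` get arbitrarily dense, so
one of them falls in a neighbourhood of `x₀` on which `b` does not vanish
(`eventually_exists_ne_zero`).
-/

open Real Filter Topology

/-- `K_{j,2}(α) = B^{-2j} ∑_{l=1}^∞ b(l/B^j)² (2l+1) l^{-α} (log l)²`. -/
noncomputable def Kfun2 (B : ℝ) (b : ℝ → ℝ) (j : ℕ) (α : ℝ) : ℝ :=
  B ^ (-(2 * (j : ℝ))) *
    ∑' l : ℕ+, (b ((l : ℝ) / B ^ (j : ℕ))) ^ 2 * (2 * (l : ℝ) + 1) * (l : ℝ) ^ (-α) *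
      Real.log (l : ℝ) ^ 2

/-- The summand of `Kfun`, used as a weight on the positive integers. -/
noncomputable def wt (B : ℝ) (b : ℝ → ℝ) (j : ℕ) (α : ℝ) (l : ℕ+) : ℝ :=
  (b ((l : ℝ) / B ^ (j : ℕ))) ^ 2 * (2 * (l : ℝ) + 1) * (l : ℝ) ^ (-α)

lemma pnat_pos (l : ℕ+) : (0 : ℝ) < (l : ℝ) := by exact_mod_cast l.pos

lemma wt_nonneg (B : ℝ) (b : ℝ → ℝ) (j : ℕ) (α : ℝ) (l : ℕ+) : 0 ≤ wt B b j α l := by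
  have := pnat_pos l
  unfold wt
  positivity

lemma ne_zero_of_wt {B : ℝ} {b : ℝ → ℝ} {j : ℕ} {α : ℝ} {l : ℕ+} (h : wt B b j α l ≠ 0) :
    b ((l : ℝ) / B ^ j) ≠ 0 := by
  intro h0
  exact h (by simp [wt, h0])

lemma log_bounds {B : ℝ} (hB : 1 < B) {b : ℝ → ℝ}
    (hsupp : Function.support b ⊆ Set.Icc B⁻¹ B) {j : ℕ} {l : ℕ+}
    (h : b ((l : ℝ) / B ^ j) ≠ 0) :
    ((j : ℝ) - 1) * Real.log B ≤ Real.log (l : ℝ) ∧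
      Real.log (l : ℝ) ≤ ((j : ℝ) + 1) * Real.log B := by
  have hB0 : 0 < B := by linarith
  have hl := pnat_pos l
  have hBj : 0 < B ^ j := by positivity
  obtain ⟨h1, h2⟩ := hsupp h
  have h1' := Real.log_le_log (by positivity) h1
  have h2' := Real.log_le_log (by positivity) h2
  rw [Real.log_div hl.ne' hBj.ne', Real.log_pow] at h1' h2'
  rw [Real.log_inv] at h1'
  constructor <;> linarith

lemma finite_support_wt {B : ℝ} (hB : 1 < B) {b : ℝ → ℝ}
    (hsupp : Function.support b ⊆ Set.Icc B⁻¹ B) (j : ℕ) (α : ℝ) :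
    (Function.support (wt B b j α)).Finite := by
  have hBj : 0 < B ^ j := by positivity
  obtain ⟨N, hN⟩ := exists_nat_gt (B * B ^ j)
  refine (Set.finite_Iic (⟨N + 1, N.succ_pos⟩ : ℕ+)).subset fun l hl => ?_
  have h2 := (hsupp (ne_zero_of_wt hl)).2
  rw [div_le_iff₀ hBj] at h2
  have : (l : ℕ) < N := by exact_mod_cast h2.trans_lt hN
  have h3 : (l : ℕ) ≤ N + 1 := by omega
  exact h3

/-- A weighted mean of `f` lies between any bounds for `f` on the support of the weight. -/
lemma weighted_mean_mem {w f : ℕ+ → ℝ} (hw : ∀ l, 0 ≤ w l)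
    (hfin : (Function.support w).Finite) (hpos : 0 < ∑' l, w l) {m M : ℝ}
    (hf : ∀ l, w l ≠ 0 → m ≤ f l ∧ f l ≤ M) :
    m ≤ (∑' l, w l * f l) / ∑' l, w l ∧ (∑' l, w l * f l) / ∑' l, w l ≤ M := by
  have hs : Summable w := summable_of_hasFiniteSupport hfin
  have hsf : Summable fun l => w l * f l :=
    summable_of_hasFiniteSupport (hfin.subset (Function.support_mul_subset_left w f))
  rw [le_div_iff₀ hpos, div_le_iff₀ hpos, ← tsum_mul_left, ← tsum_mul_left]
  refine ⟨(hs.mul_left m).tsum_le_tsum (fun l => ?_) hsf,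
    hsf.tsum_le_tsum (fun l => ?_) (hs.mul_left M)⟩
  all_goals
    by_cases h : w l = 0
    · simp [h]
    · obtain ⟨h1, h2⟩ := hf l h
      nlinarith [hw l]

lemma eventually_exists_ne_zero {B : ℝ} (hB : 1 < B) {b : ℝ → ℝ} (hb : Continuous b)
    {x₀ : ℝ} (hx₀ : 0 < x₀) (hne : b x₀ ≠ 0) :
    ∀ᶠ j : ℕ in atTop, ∃ l : ℕ+, b ((l : ℝ) / B ^ j) ≠ 0 := by
  obtain ⟨ε, hε, hball⟩ := Metric.eventually_nhds_iff.1 (hb.continuousAt.eventually_ne hne)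
  filter_upwards [(tendsto_pow_atTop_atTop_of_one_lt hB).eventually_gt_atTop ε⁻¹] with j hj
  have hBj : 0 < B ^ j := by positivity
  refine ⟨⟨⌈x₀ * B ^ j⌉₊, Nat.ceil_pos.2 (by positivity)⟩, hball ?_⟩
  have h1 := Nat.le_ceil (x₀ * B ^ j)
  have h2 := Nat.ceil_lt_add_one (a := x₀ * B ^ j) (by positivity)
  have h3 : 1 < ε * B ^ j := by rwa [inv_lt_iff_one_lt_mul₀' hε] at hj
  rw [Real.dist_eq, PNat.mk_coe, abs_lt]
  constructor
  · have := (le_div_iff₀ hBj).2 h1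
    linarith
  · rw [sub_lt_iff_lt_add, div_lt_iff₀ hBj]
    linarith

theorem Kfun_U2_limit (B : ℝ) (hB : 1 < B) (b : ℝ → ℝ) (hb : Continuous b)
    (hsupp : Function.support b ⊆ Set.Icc B⁻¹ B)
    (hne : ∃ x₀ ∈ Set.Ioo B⁻¹ B, b x₀ ≠ 0) (α : ℝ) :
    Tendsto (fun j : ℕ =>
      (2 * (Kfun1 B b j α / Kfun B b j α) ^ 2 - Kfun2 B b j α / Kfun B b j α) /
        ((j : ℝ) * Real.log B) ^ 2)
      atTop (𝓝 1) := by
  obtain ⟨x₀, hx₀, hbx₀⟩ := hne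
  have hB0 : 0 < B := by linarith
  have hL : 0 < Real.log B := Real.log_pos hB
  have hpos : ∀ᶠ j : ℕ in atTop, 0 < ∑' l, wt B b j α l := by
    filter_upwards [eventually_exists_ne_zero hB hb ((inv_pos.2 hB0).trans hx₀.1) hbx₀]
      with j ⟨l, hl⟩
    refine (summable_of_hasFiniteSupport (finite_support_wt hB hsupp j α)).tsum_pos
      (wt_nonneg B b j α) l ?_
    have := pnat_pos l
    unfold wt
    positivity
  -- The prefactor `B ^ (-2j)` cancels in the quotients.
  have e1 : ∀ j, Kfun1 B b j α / Kfun B b j α =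
      -((∑' l : ℕ+, wt B b j α l * Real.log (l : ℝ)) / ∑' l, wt B b j α l) := by
    intro j
    simp only [Kfun1, Kfun, wt]
    rw [neg_div, mul_div_mul_left _ _ (Real.rpow_pos_of_pos hB0 _).ne']
  have e2 : ∀ j, Kfun2 B b j α / Kfun B b j α =
      (∑' l : ℕ+, wt B b j α l * Real.log (l : ℝ) ^ 2) / ∑' l, wt B b j α l := by
    intro j
    simp only [Kfun2, Kfun, wt]
    rw [mul_div_mul_left _ _ (Real.rpow_pos_of_pos hB0 _).ne']
  have hinv : Tendsto (fun j : ℕ => (1 : ℝ) / j) atTop (𝓝 0) := tendsto_one_div_atTop_nhds_zero_nat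
  have hlo : Tendsto (fun j : ℕ => 1 - (1 : ℝ) / j) atTop (𝓝 1) := by simpa using hinv.const_sub 1
  have hhi : Tendsto (fun j : ℕ => 1 + (1 : ℝ) / j) atTop (𝓝 1) := by simpa using hinv.const_add 1
  have key : ∀ᶠ j : ℕ in atTop, 0 < (j : ℝ) ∧ ∀ l : ℕ+, wt B b j α l ≠ 0 →
      0 ≤ 1 - (1 : ℝ) / j ∧
      (1 - (1 : ℝ) / j) * (j * Real.log B) ≤ Real.log (l : ℝ) ∧
        Real.log (l : ℝ) ≤ (1 + (1 : ℝ) / j) * (j * Real.log B) := by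
    filter_upwards [eventually_ge_atTop 1] with j hj
    have hj1 : (1 : ℝ) ≤ j := by exact_mod_cast hj
    have hj0 : (0 : ℝ) < j := by linarith
    refine ⟨hj0, fun l hl => ?_⟩
    obtain ⟨h1, h2⟩ := log_bounds hB hsupp (ne_zero_of_wt hl)
    have q1 : (1 - (1 : ℝ) / j) * (j * Real.log B) = (j - 1) * Real.log B := by field_simp
    have q2 : (1 + (1 : ℝ) / j) * (j * Real.log B) = (j + 1) * Real.log B := by field_simp
    exact ⟨sub_nonneg.2 ((div_le_one hj0).2 hj1), q1 ▸ h1, q2 ▸ h2⟩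
  have t1 : Tendsto (fun j : ℕ => ((∑' l : ℕ+, wt B b j α l * Real.log (l : ℝ)) /
      ∑' l, wt B b j α l) / (j * Real.log B)) atTop (𝓝 1) := by
    refine tendsto_of_tendsto_of_tendsto_of_le_of_le' hlo hhi ?_ ?_
    all_goals
      filter_upwards [hpos, key] with j hp ⟨hj, hk⟩
      obtain ⟨h1, h2⟩ := weighted_mean_mem (wt_nonneg B b j α) (finite_support_wt hB hsupp j α) hp
        (fun l hl => (hk l hl).2)
      have hjL : 0 < j * Real.log B := by positivity
      first
        | exact (le_div_iff₀ hjL).2 h1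
        | exact (div_le_iff₀ hjL).2 h2
  have t2 : Tendsto (fun j : ℕ => ((∑' l : ℕ+, wt B b j α l * Real.log (l : ℝ) ^ 2) /
      ∑' l, wt B b j α l) / (j * Real.log B) ^ 2) atTop (𝓝 1) := by
    have hlo2 : Tendsto (fun j : ℕ => (1 - (1 : ℝ) / j) ^ 2) atTop (𝓝 1) := by
      simpa using hlo.pow 2
    have hhi2 : Tendsto (fun j : ℕ => (1 + (1 : ℝ) / j) ^ 2) atTop (𝓝 1) := by
      simpa using hhi.pow 2
    refine tendsto_of_tendsto_of_tendsto_of_le_of_le' hlo2 hhi2 ?_ ?_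
    all_goals
      filter_upwards [hpos, key] with j hp ⟨hj, hk⟩
      have hjL : 0 < j * Real.log B := by positivity
      obtain ⟨h1, h2⟩ := weighted_mean_mem (f := fun l : ℕ+ => Real.log (l : ℝ) ^ 2)
        (m := ((1 - (1 : ℝ) / j) * (j * Real.log B)) ^ 2)
        (M := ((1 + (1 : ℝ) / j) * (j * Real.log B)) ^ 2)
        (wt_nonneg B b j α) (finite_support_wt hB hsupp j α) hp
        (fun l hl => by
          obtain ⟨k0, k1, k2⟩ := hk l hl
          have k3 := mul_nonneg k0 hjL.le
          exact ⟨pow_le_pow_left₀ k3 k1 2, pow_le_pow_left₀ (k3.trans k1) k2 2⟩)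
      rw [mul_pow] at h1 h2
      first
        | exact (le_div_iff₀ (pow_pos hjL 2)).2 h1
        | exact (div_le_iff₀ (pow_pos hjL 2)).2 h2
  have t3 := ((t1.pow 2).const_mul 2).sub t2
  norm_num at t3
  refine t3.congr fun j => ?_
  rw [e1, e2, neg_sq, sub_div, div_pow, mul_div_assoc]
end

section
/- Let B > 1 be a real number. For every real number x with x > −2 and x ≠ 0, one has log( (B² − 1)/(B^{2+x} − 1) ) + x · (B²/(B² − 1)) · log B > 0; moreover this expression equals 0 when x = 0. -/
/-!
Put `a = B ^ 2`, `t = B ^ x` and `p = a / (a - 1) > 1`. Since `x ≠ 0`, we have `t ≠ 1`, so the strict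
Bernoulli inequality gives `1 + p * (t - 1) < t ^ p`. Multiplied by `a - 1`, the left-hand side is
`a * t - 1 = B ^ (2 + x) - 1`. Taking logarithms of `B ^ (2 + x) - 1 < (a - 1) * t ^ p` proves the
claim, because `log (t ^ p) = p * x * log B`.
-/

theorem l_function_pos (B : ℝ) (hB : 1 < B) :
    (∀ x : ℝ, -2 < x → x ≠ 0 →
      0 < Real.log ((B ^ 2 - 1) / (B ^ (2 + x) - 1)) +
            x * (B ^ 2 / (B ^ 2 - 1)) * Real.log B) ∧
    Real.log ((B ^ 2 - 1) / (B ^ (2 + (0 : ℝ)) - 1)) +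
        (0 : ℝ) * (B ^ 2 / (B ^ 2 - 1)) * Real.log B = 0 := by
  have hB0 : 0 < B := by linarith
  have ha : 0 < B ^ 2 - 1 := by nlinarith
  constructor
  · intro x hx hx0
    have hpos : 0 < B ^ (2 + x) - 1 := by
      have := Real.one_lt_rpow hB (show 0 < 2 + x by linarith)
      linarith
    have ht : 0 < B ^ x := Real.rpow_pos_of_pos hB0 x
    have ht1 : B ^ x - 1 ≠ 0 := by
      intro h
      have h1 : Real.log (B ^ x) = 0 := by
        rw [sub_eq_zero.mp h, Real.log_one]
      rw [Real.log_rpow hB0] at h1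
      exact mul_ne_zero hx0 (Real.log_pos hB).ne' h1
    have hp : 1 < B ^ 2 / (B ^ 2 - 1) := by
      rw [lt_div_iff₀ ha]
      linarith
    have hbern := one_add_mul_self_lt_rpow_one_add (by linarith : -1 ≤ B ^ x - 1) ht1 hp
    rw [add_sub_cancel] at hbern
    have heq : B ^ (2 + x) - 1 = (B ^ 2 - 1) * (1 + B ^ 2 / (B ^ 2 - 1) * (B ^ x - 1)) := by
      rw [Real.rpow_add hB0, Real.rpow_two]
      field_simp
      ring
    have hlt : B ^ (2 + x) - 1 < (B ^ 2 - 1) * (B ^ x) ^ (B ^ 2 / (B ^ 2 - 1)) := by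
      rw [heq]
      exact mul_lt_mul_of_pos_left hbern ha
    have hlog := Real.log_lt_log hpos hlt
    rw [Real.log_mul ha.ne' (Real.rpow_pos_of_pos ht _).ne', Real.log_rpow ht,
      Real.log_rpow hB0] at hlog
    rw [Real.log_div ha.ne' hpos.ne']
    linarith
  · rw [add_zero, Real.rpow_two, div_self ha.ne']
    simp
end

section
/- Assume b(x) > 0 for every x ∈ (B⁻¹, B), fix real numbers α and α₀ with α − α₀ > −2, and assume K_j(α) > 0 and K_j(α₀) > 0 for every integer j ≥ 1. Then lim_{J→∞} [ log( (∑_{j=1}^{J} B^{2j} · K_j(α₀)/K_j(α)) / (∑_{j=1}^{J} B^{2j}) ) − (∑_{j=1}^{J} B^{2j} · log( K_j(α₀)/K_j(α) )) / (∑_{j=1}^{J} B^{2j}) ] = log( (B² − 1)/(B^{2+α−α₀} − 1) ) + (α − α₀) · (B²/(B² − 1)) · log B, the limit being taken as the integer J tends to infinity. -/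
open Real Filter Topology

/-- Cesàro means with geometrically growing weights `q ^ j` preserve limits. -/
theorem tendsto_weighted_mean {q : ℝ} (hq : 1 < q) {r : ℕ → ℝ} {c : ℝ}
    (hr : Tendsto r atTop (𝓝 c)) :
    Tendsto (fun J : ℕ => (∑ j ∈ Finset.Icc 1 J, q ^ j * r j) / ∑ j ∈ Finset.Icc 1 J, q ^ j)
      atTop (𝓝 c) := by
  have hq0 : 0 < q := by linarith
  have shift : ∀ (f : ℕ → ℝ) (J : ℕ),
      ∑ j ∈ Finset.Icc 1 J, f j = ∑ i ∈ Finset.range J, f (i + 1) := by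
    intro f J
    rw [Finset.range_eq_Ico, Finset.sum_Ico_add' f 0 J 1]
    rfl
  have hlo : (fun i : ℕ => q ^ (i + 1) * (r (i + 1) - c)) =o[atTop] fun i : ℕ => q ^ (i + 1) := by
    have h1 : (fun i : ℕ => r (i + 1) - c) =o[atTop] fun _ : ℕ => (1 : ℝ) := by
      rw [Asymptotics.isLittleO_one_iff]
      simpa using ((tendsto_add_atTop_iff_nat 1).2 hr).sub_const c
    simpa using (Asymptotics.isBigO_refl (fun i : ℕ => q ^ (i + 1)) atTop).mul_isLittleO h1
  have hdiv : Tendsto (fun J : ℕ => ∑ i ∈ Finset.range J, q ^ (i + 1)) atTop atTop := by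
    refine tendsto_atTop_mono (fun J => ?_) tendsto_natCast_atTop_atTop
    calc (J : ℝ) = ∑ i ∈ Finset.range J, (1 : ℝ) := by simp
      _ ≤ _ := Finset.sum_le_sum fun i _ => one_le_pow₀ hq.le
  have hs := (hlo.sum_range (fun i => by positivity) hdiv).tendsto_div_nhds_zero
  have := hs.add_const c
  rw [zero_add] at this
  refine this.congr' ?_
  filter_upwards [eventually_ge_atTop 1] with J hJ
  rw [shift, shift]
  have hpos : 0 < ∑ i ∈ Finset.range J, q ^ (i + 1) :=
    Finset.sum_pos (fun i _ => by positivity) ⟨0, by simp; omega⟩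
  rw [div_add' _ _ _ hpos.ne', Finset.mul_sum, ← Finset.sum_add_distrib]
  congr 1
  exact Finset.sum_congr rfl fun i _ => by ring

theorem sum_Icc_pow {q : ℝ} (hq : 1 < q) (J : ℕ) :
    ∑ j ∈ Finset.Icc 1 J, q ^ j = q * (q ^ J - 1) / (q - 1) := by
  have : q - 1 ≠ 0 := by linarith
  induction J with
  | zero => simp
  | succ J ih =>
    rw [Finset.sum_Icc_succ_top (by omega), ih]
    field_simp
    ring

theorem sum_Icc_mul_pow {q : ℝ} (hq : 1 < q) (J : ℕ) :
    ∑ j ∈ Finset.Icc 1 J, q ^ j * (j : ℝ) =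
      (J * q ^ (J + 2) - (J + 1) * q ^ (J + 1) + q) / (q - 1) ^ 2 := by
  have : q - 1 ≠ 0 := by linarith
  induction J with
  | zero => simp
  | succ J ih =>
    rw [Finset.sum_Icc_succ_top (by omega), ih]
    field_simp
    push_cast
    ring

/-- If `R j` behaves like `c * (p / q) ^ j`, the logarithm of its `q ^ j`-weighted arithmetic mean
minus that of its weighted geometric mean has a limit independent of `c`. -/
theorem tendsto_log_mean_sub_mean_log {p q : ℝ} (hp : 1 < p) (hq : 1 < q) {R : ℕ → ℝ} {c : ℝ}
    (hc : 0 < c) (hR : ∀ j, 1 ≤ j → 0 < R j)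
    (hlim : Tendsto (fun j => R j * (q / p) ^ j) atTop (𝓝 c)) :
    Tendsto (fun J : ℕ =>
      log ((∑ j ∈ Finset.Icc 1 J, q ^ j * R j) / ∑ j ∈ Finset.Icc 1 J, q ^ j) -
        (∑ j ∈ Finset.Icc 1 J, q ^ j * log (R j)) / ∑ j ∈ Finset.Icc 1 J, q ^ j) atTop
      (𝓝 (log ((q - 1) / (p - 1)) + (log p - log q) * (q / (q - 1)))) := by
  have hp0 : 0 < p := by linarith
  have hq0 : 0 < q := by linarith
  have hp1 : 0 < p - 1 := by linarith
  have hq1 : 0 < q - 1 := by linarith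
  have h1 := (tendsto_weighted_mean hp hlim).log hc.ne'
  have h2 := tendsto_weighted_mean hq (hlim.log hc.ne')
  have inv0 : ∀ {x : ℝ}, 1 < x → Tendsto (fun J : ℕ => (x⁻¹) ^ J) atTop (𝓝 0) := fun {x} hx =>
    tendsto_pow_atTop_nhds_zero_of_lt_one (by positivity) (inv_lt_one_of_one_lt₀ hx)
  have h3 : Tendsto (fun J : ℕ => log ((1 - (p⁻¹) ^ J) / (1 - (q⁻¹) ^ J))) atTop (𝓝 0) := by
    have : Tendsto (fun J : ℕ => (1 - (p⁻¹) ^ J) / (1 - (q⁻¹) ^ J)) atTop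
        (𝓝 ((1 - 0) / (1 - 0))) :=
      ((inv0 hp).const_sub 1).div ((inv0 hq).const_sub 1) (by norm_num)
    simpa using this.log (by norm_num)
  have h4 : Tendsto (fun J : ℕ => (J * (q⁻¹) ^ J) / (1 - (q⁻¹) ^ J)) atTop (𝓝 0) := by
    have := (tendsto_self_mul_const_pow_of_lt_one (r := q⁻¹) (by positivity)
      (inv_lt_one_of_one_lt₀ hq)).div ((inv0 hq).const_sub 1) (by norm_num)
    simpa [Pi.div_def] using this
  -- For `J ≥ 1` the limits above combine exactly to the expression of the theorem, because
  -- `(∑ j q ^ j) / ∑ q ^ j = J - 1 / (q - 1) + J / (q ^ J - 1)` and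
  -- `x ^ J - 1 = x ^ J * (1 - x⁻¹ ^ J)`.
  have key := (((h1.sub h2).add h3).sub (h4.const_mul (log p - log q))).add_const
    (log ((q - 1) / (p - 1)) + (log p - log q) * (q / (q - 1)))
  simp only [sub_self, add_zero, mul_zero, zero_add] at key
  refine key.congr' ?_
  filter_upwards [eventually_ge_atTop 1] with J hJ
  have hJ0 : J ≠ 0 := by omega
  have hpJ : 0 < p ^ J - 1 := by linarith [one_lt_pow₀ hp hJ0]
  have hqJ : 0 < q ^ J - 1 := by linarith [one_lt_pow₀ hq hJ0]
  have hA : ∑ j ∈ Finset.Icc 1 J, p ^ j * (R j * (q / p) ^ j) =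
      ∑ j ∈ Finset.Icc 1 J, q ^ j * R j :=
    Finset.sum_congr rfl fun j _ => by rw [div_pow]; field_simp
  have hApos : 0 < ∑ j ∈ Finset.Icc 1 J, q ^ j * R j :=
    Finset.sum_pos (fun j hj => mul_pos (by positivity) (hR j (Finset.mem_Icc.1 hj).1))
      ⟨1, by simp; omega⟩
  have hL : ∑ j ∈ Finset.Icc 1 J, q ^ j * log (R j * (q / p) ^ j) =
      ∑ j ∈ Finset.Icc 1 J, q ^ j * log (R j) -
        (log p - log q) * ∑ j ∈ Finset.Icc 1 J, q ^ j * (j : ℝ) := by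
    rw [Finset.mul_sum, ← Finset.sum_sub_distrib]
    refine Finset.sum_congr rfl fun j hj => ?_
    rw [log_mul (hR j (Finset.mem_Icc.1 hj).1).ne' (by positivity), log_pow,
      log_div hq0.ne' hp0.ne']
    ring
  have e1 : ∀ {x : ℝ}, 1 < x → 1 - (x⁻¹) ^ J = (x ^ J - 1) / x ^ J := fun {x} hx => by
    have : x ≠ 0 := by linarith
    rw [inv_pow]; field_simp
  rw [hA, hL, sum_Icc_mul_pow hq, sum_Icc_pow hq, sum_Icc_pow hp, e1 hp, e1 hq]
  rw [log_div hApos.ne' (by positivity), log_div hApos.ne' (by positivity),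
    log_div (by positivity) (by positivity), log_div (by positivity) (by positivity),
    log_div (by positivity) (by positivity), log_div (by positivity) (by positivity),
    log_div (by positivity) (by positivity), log_div (by positivity) (by positivity),
    log_mul (by positivity) (by positivity), log_mul (by positivity) (by positivity),
    log_pow, log_pow]
  generalize log (∑ j ∈ Finset.Icc 1 J, q ^ j * R j) = X
  generalize ∑ j ∈ Finset.Icc 1 J, q ^ j * log (R j) = Y
  generalize log p = lp
  generalize log q = lq
  rw [inv_pow, pow_add, pow_add]
  have hQ : q ^ J ≠ 0 := by positivity
  generalize q ^ J = Q at *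
  field_simp
  ring

/-- Riemann sums with real mesh `1 / N j → 0` of a continuous function supported in `(0, C]`
converge to its integral. -/
theorem tendsto_riemann_sum_s13 {g : ℝ → ℝ} (hg : Continuous g) {C : ℝ} (hC : 0 < C)
    (hs : Function.support g ⊆ Set.Ioc 0 C) {N : ℕ → ℝ} (hN : Tendsto N atTop atTop) :
    Tendsto (fun j => (N j)⁻¹ * ∑' l : ℕ+, g (l / N j)) atTop (𝓝 (∫ x, g x)) := by
  have huc : UniformContinuous g := by
    refine HasCompactSupport.uniformContinuous_of_continuous
      (HasCompactSupport.intro (isCompact_Icc (a := 0) (b := C)) fun x hx => ?_) hg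
    by_contra h
    exact hx (Set.Ioc_subset_Icc_self (hs h))
  rw [Metric.tendsto_nhds]
  intro ε hε
  -- At most `C * n + 2 ≤ (C + 2) * n` cells of length `1 / n` matter, so a modulus of
  -- `ε / (2 * (C + 2))` on each cell gives a total error of at most `ε / 2`.
  have hη : 0 < ε / (2 * (C + 2)) := by positivity
  obtain ⟨δ, hδ, hδ'⟩ := Metric.uniformContinuous_iff.1 huc _ hη
  filter_upwards [hN.eventually_ge_atTop 1, hN.eventually_gt_atTop δ⁻¹] with j hj1 hj2
  set n := N j
  have hn : 0 < n := by linarith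
  have hnδ : n⁻¹ < δ := inv_lt_of_inv_lt₀ hδ hj2
  set M := ⌈C * n⌉₊ + 1 with hM
  have hM1 : C * n < M := by
    have := Nat.le_ceil (C * n)
    push_cast [hM]; linarith
  have hM2 : (M : ℝ) ≤ C * n + 2 := by
    have := Nat.ceil_lt_add_one (a := C * n) (by positivity)
    push_cast [hM]; linarith
  have hz : ∀ x, x ∉ Set.Ioc 0 C → g x = 0 := fun x hx => by
    by_contra h
    exact hx (hs h)
  have hsum : ∑' l : ℕ+, g (l / n) = ∑ l ∈ Finset.range M, g (l / n) := by
    rw [tsum_pnat_eq_tsum_succ (f := fun l : ℕ => g (l / n)), hM, Finset.sum_range_succ',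
      hz ((0 : ℕ) / n) (by simp), add_zero]
    refine tsum_eq_sum fun l hl => hz _ fun h => ?_
    have hl' : ⌈C * n⌉₊ ≤ l := by simpa using hl
    have h1 : (⌈C * n⌉₊ : ℝ) ≤ l := by exact_mod_cast hl'
    have h2 := (div_le_iff₀ hn).1 h.2
    push_cast [hM] at hM1 h2
    linarith [Nat.le_ceil (C * n)]
  have hint : ∫ x, g x = ∑ l ∈ Finset.range M, ∫ x in ((l : ℕ) / n)..((l + 1 : ℕ) / n), g x := by
    rw [intervalIntegral.sum_integral_adjacent_intervals
      (a := fun l : ℕ => (l : ℝ) / n) fun k _ => hg.intervalIntegrable _ _]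
    symm
    apply intervalIntegral.integral_eq_integral_of_support_subset
    refine hs.trans (Set.Ioc_subset_Ioc (by simp) ?_)
    rw [le_div_iff₀ hn]; exact hM1.le
  rw [hsum, hint, dist_eq_norm, Finset.mul_sum, ← Finset.sum_sub_distrib]
  have hterm : ∀ l ∈ Finset.range M,
      ‖n⁻¹ * g (l / n) - ∫ x in ((l : ℕ) / n)..((l + 1 : ℕ) / n), g x‖ ≤
        ε / (2 * (C + 2)) * n⁻¹ := by
    intro l _
    have hlen : ((l + 1 : ℕ) : ℝ) / n - l / n = n⁻¹ := by
      push_cast; field_simp; ring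
    have hle : (l : ℝ) / n ≤ ((l + 1 : ℕ) : ℝ) / n := by
      have : 0 < n⁻¹ := by positivity
      linarith
    have e : n⁻¹ * g (l / n) = ∫ x in ((l : ℕ) / n)..((l + 1 : ℕ) / n), g (l / n) := by
      rw [intervalIntegral.integral_const, hlen, smul_eq_mul]
    rw [e, ← intervalIntegral.integral_sub (by simp) (hg.intervalIntegrable _ _)]
    refine (intervalIntegral.norm_integral_le_of_norm_le_const
      (C := ε / (2 * (C + 2))) fun x hx => ?_).trans ?_
    · rw [Set.uIoc_of_le hle] at hx
      rw [← dist_eq_norm]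
      refine (hδ' ?_).le
      rw [Real.dist_eq, abs_lt]
      constructor <;> linarith [hx.1, hx.2]
    · rw [hlen, abs_of_pos (by positivity)]
  calc _ ≤ ∑ l ∈ Finset.range M, ε / (2 * (C + 2)) * n⁻¹ := norm_sum_le_of_le _ hterm
    _ = ε / (2 * (C + 2)) * (M / n) := by simp; ring
    _ ≤ ε / (2 * (C + 2)) * (C + 2) := by
      gcongr
      rw [div_le_iff₀ hn]
      nlinarith
    _ = ε / 2 := by field_simp
    _ < ε := by linarith

/-- `K_j(α)` is asymptotic to a positive constant times `B ^ (-j α)`; the constant is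
`2 ∫ b(x)² x^{1-α} dx`. -/
theorem tendsto_Kfun {B : ℝ} (hB : 1 < B) {b : ℝ → ℝ} (hb : Continuous b)
    (hsupp : Function.support b ⊆ Set.Icc B⁻¹ B)
    (hbpos : ∀ x ∈ Set.Ioo B⁻¹ B, 0 < b x) (α : ℝ) :
    ∃ I : ℝ, 0 < I ∧ Tendsto (fun j : ℕ => (B ^ j) ^ α * Kfun B b j α) atTop (𝓝 I) := by
  have hB0 : 0 < B := by linarith
  have hBi : 0 < B⁻¹ := by positivity
  have hBi1 : B⁻¹ < 1 := inv_lt_one_of_one_lt₀ hB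
  set f : ℝ → ℝ := fun x => b x ^ 2 * x ^ (-α) with hf
  have hbz : ∀ x, x ∉ Set.Icc B⁻¹ B → b x = 0 := fun x hx => by
    by_contra h
    exact hx (hsupp h)
  have hfz : ∀ x, x ∉ Set.Icc B⁻¹ B → f x = 0 := fun x hx => by simp [hf, hbz x hx]
  -- The singularity of `x ^ (-α)` at `0` is harmless because `b` vanishes below `B⁻¹`.
  have hfc : Continuous f := by
    rw [continuous_iff_continuousAt]
    intro x
    rcases lt_or_ge x B⁻¹ with hx | hx
    · have : f =ᶠ[𝓝 x] fun _ => 0 := by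
        filter_upwards [Iio_mem_nhds hx] with y hy
        exact hfz y fun h => absurd h.1 (not_le.2 hy)
      exact continuousAt_const.congr this.symm
    · exact (hb.continuousAt.pow 2).mul (continuousAt_rpow_const _ _ (Or.inl (by linarith)))
  have hgc : Continuous fun x => f x * x := hfc.mul continuous_id
  have hsub : Set.Icc B⁻¹ B ⊆ Set.Ioc 0 B := fun x hx => ⟨hBi.trans_le hx.1, hx.2⟩
  have hfs : Function.support f ⊆ Set.Icc B⁻¹ B := fun x hx => by
    by_contra h
    exact hx (hfz x h)
  have hgs : Function.support (fun x => f x * x) ⊆ Set.Icc B⁻¹ B := fun x hx =>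
    hfs (left_ne_zero_of_mul hx)
  have hN : Tendsto (fun j : ℕ => B ^ j) atTop atTop := tendsto_pow_atTop_atTop_of_one_lt hB
  have t1 := tendsto_riemann_sum_s13 hgc hB0 (hgs.trans hsub) hN
  have t2 := tendsto_riemann_sum_s13 hfc hB0 (hfs.trans hsub) hN
  have t3 := (t1.const_mul 2).add (hN.inv_tendsto_atTop.mul t2)
  rw [zero_mul, add_zero] at t3
  refine ⟨2 * ∫ x, f x * x, ?_, t3.congr fun j => ?_⟩
  · refine mul_pos two_pos (hgc.integral_pos_of_hasCompactSupport_nonneg_nonzero (x := 1) ?_ ?_ ?_)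
    · refine HasCompactSupport.intro (isCompact_Icc (a := B⁻¹) (b := B)) fun x hx => ?_
      simp [hfz x hx]
    · intro x
      by_cases hx : x ∈ Set.Icc B⁻¹ B
      · have : 0 < x := (hsub hx).1
        simp only [Pi.zero_apply, hf]
        positivity
      · simp [hfz x hx]
    · have := hbpos 1 ⟨hBi1, hB⟩
      simp [hf, this.ne']
  · simp only [Pi.inv_apply]
    unfold Kfun
    set n := B ^ j with hn'
    have hn : 0 < n := by positivity
    have hB2 : B ^ (-(2 * (j : ℝ))) = n⁻¹ * n⁻¹ := by
      rw [rpow_neg hB0.le, mul_comm, rpow_mul hB0.le, rpow_natCast, ← hn']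
      norm_num [sq]
    have summ : ∀ h : ℝ → ℝ, Function.support h ⊆ Set.Icc B⁻¹ B →
        Summable fun l : ℕ+ => h (l / n) := by
      intro h hh
      refine summable_of_hasFiniteSupport ?_
      refine (Set.finite_Iic (⟨⌈B * n⌉₊ + 1, by omega⟩ : ℕ+)).subset fun (l : ℕ+) hl => ?_
      have h1 : (l : ℝ) ≤ B * n := (div_le_iff₀ hn).1 (hh hl).2
      have h2 : (l : ℝ) ≤ (⌈B * n⌉₊ + 1 : ℕ) := by
        push_cast
        linarith [Nat.le_ceil (B * n)]
      have h3 : (l : ℕ) ≤ ⌈B * n⌉₊ + 1 := by exact_mod_cast h2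
      exact h3
    have hterm : ∀ l : ℕ+, b (l / n) ^ 2 * (2 * (l : ℝ) + 1) * (l : ℝ) ^ (-α) =
        n ^ (-α) * (2 * n) * (f (l / n) * (l / n)) + n ^ (-α) * f (l / n) := by
      intro l
      have hl : (0 : ℝ) < l := by exact_mod_cast l.pos
      have : (l : ℝ) ^ (-α) = n ^ (-α) * (l / n) ^ (-α) := by
        rw [← mul_rpow hn.le (by positivity)]
        congr 1
        field_simp
      rw [this]
      simp only [hf]
      field_simp
    simp_rw [hterm]
    rw [Summable.tsum_add ((summ _ hgs).mul_left _) ((summ _ hfs).mul_left _), tsum_mul_left,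
      tsum_mul_left, hB2, rpow_neg hn.le]
    have : n ^ α ≠ 0 := by positivity
    field_simp

theorem U_limit_case_gt (B : ℝ) (hB : 1 < B) (b : ℝ → ℝ) (hb : Continuous b)
    (hsupp : Function.support b ⊆ Set.Icc B⁻¹ B)
    (hbpos : ∀ x ∈ Set.Ioo B⁻¹ B, 0 < b x)
    (α α₀ : ℝ) (hdiff : -2 < α - α₀)
    (hK : ∀ j : ℕ, 1 ≤ j → 0 < Kfun B b j α)
    (hK0 : ∀ j : ℕ, 1 ≤ j → 0 < Kfun B b j α₀) :
    Tendsto (fun J : ℕ =>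
      Real.log ((∑ j ∈ Finset.Icc 1 J, B ^ (2 * (j : ℝ)) * (Kfun B b j α₀ / Kfun B b j α)) /
          (∑ j ∈ Finset.Icc 1 J, B ^ (2 * (j : ℝ)))) -
        (∑ j ∈ Finset.Icc 1 J, B ^ (2 * (j : ℝ)) * Real.log (Kfun B b j α₀ / Kfun B b j α)) /
          (∑ j ∈ Finset.Icc 1 J, B ^ (2 * (j : ℝ))))
      atTop
      (𝓝 (Real.log ((B ^ 2 - 1) / (B ^ (2 + α - α₀) - 1)) +
        (α - α₀) * (B ^ 2 / (B ^ 2 - 1)) * Real.log B)) := by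
  have hB0 : 0 < B := by linarith
  obtain ⟨I, hI, hIt⟩ := tendsto_Kfun hB hb hsupp hbpos α
  obtain ⟨I₀, hI₀, hIt₀⟩ := tendsto_Kfun hB hb hsupp hbpos α₀
  have hp : 1 < B ^ (2 + α - α₀) := one_lt_rpow hB (by linarith)
  have hq : 1 < B ^ 2 := one_lt_pow₀ hB (by norm_num)
  have hlim : Tendsto (fun j => Kfun B b j α₀ / Kfun B b j α *
      (B ^ 2 / B ^ (2 + α - α₀)) ^ j) atTop (𝓝 (I₀ / I)) := by
    refine (hIt₀.div hIt hI.ne').congr fun j => ?_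
    have e : (B ^ 2 / B ^ (2 + α - α₀)) ^ j = (B ^ j) ^ α₀ / (B ^ j) ^ α := by
      rw [← rpow_natCast B 2, ← rpow_sub hB0, ← rpow_natCast B j, ← rpow_mul hB0.le,
        ← rpow_mul hB0.le, ← rpow_sub hB0, ← rpow_natCast, ← rpow_mul hB0.le]
      congr 1
      push_cast
      ring
    rw [e]
    simp only [Pi.div_apply]
    rw [mul_div_mul_comm, mul_comm]
  have key := tendsto_log_mean_sub_mean_log hp hq (div_pos hI₀ hI)
    (fun j hj => div_pos (hK0 j hj) (hK j hj)) hlim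
  have hpow : ∀ j : ℕ, B ^ (2 * (j : ℝ)) = (B ^ 2) ^ j := fun j => by
    rw [rpow_mul hB0.le, rpow_natCast]
    norm_num
  simp only [hpow]
  convert key using 2
  rw [log_rpow hB0, log_pow]
  push_cast
  ring
end

section
/- Assume b(x) > 0 for every x ∈ (B⁻¹, B), fix real numbers α and α₀ with α − α₀ < −2, and assume K_j(α) > 0 and K_j(α₀) > 0 for every integer j ≥ 1. Then lim_{J→∞} (1/(2 J log B)) · [ log( (∑_{j=1}^{J} B^{2j} · K_j(α₀)/K_j(α)) / (∑_{j=1}^{J} B^{2j}) ) − (∑_{j=1}^{J} B^{2j} · log( K_j(α₀)/K_j(α) )) / (∑_{j=1}^{J} B^{2j}) ] = (α₀ − α)/2 − 1, the limit being taken as the integer J tends to infinity and this limit being strictly positive. -/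
/-!
Put `d = α₀ - α > 2`. Only integers `l` with `B^(j-1) ≤ l ≤ B^(j+1)` contribute to `K_j`, and there
`l^(-α₀) = l^(-α) l^(-d)`, so the ratio `r_j = K_j(α₀) / K_j(α)` satisfies
`|log r_j + d j log B| ≤ d log B` (`abs_log_ratio_le`). The three parts of the bracket are
then known up to a bounded error:

* `∑ B^(2j) r_j` stays between two positive constants, because `d > 2` makes the series converge
  (`log_weighted_sum_bounded`);
* `log ∑ B^(2j) = 2 J log B + O(1)` (`abs_log_geom_sum_le`);
* the weights `B^(2j)` concentrate near `j = J`: the weighted mean of `J - j` is bounded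
  (`geom_deficit_le`), so the weighted mean of `log r_j` is `-d J log B + O(1)`
  (`abs_weighted_mean_le`).

Hence the bracket equals `(d - 2) J log B + O(1)`, and dividing by `2 J log B` gives `d / 2 - 1`.
-/

open Real Filter Topology

theorem geom_sum_le (q : ℝ) (hq : 1 < q) (J : ℕ) :
    ∑ j ∈ Finset.Icc 1 J, q ^ j ≤ q / (q - 1) * q ^ J := by
  have h1 : 0 < q - 1 := by linarith
  induction J with
  | zero => simp; positivity
  | succ n ih =>
    rw [Finset.sum_Icc_succ_top (by omega)]
    have : q / (q - 1) * q ^ (n + 1) = q / (q - 1) * q ^ n + q ^ (n + 1) := by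
      field_simp
      ring
    linarith

/-- The mean of `J - j` for `1 ≤ j ≤ J` under the weights `q ^ j` is bounded uniformly in `J`. -/
theorem geom_deficit_le (q : ℝ) (hq : 1 < q) (J : ℕ) :
    ∑ j ∈ Finset.Icc 1 J, q ^ j * ((J : ℝ) - j) ≤
      q / (q - 1) * ∑ j ∈ Finset.Icc 1 J, q ^ j := by
  have h1 : 0 < q - 1 := by linarith
  induction J with
  | zero => simp
  | succ n ih =>
    rw [Finset.sum_Icc_succ_top (by omega), Finset.sum_Icc_succ_top (by omega)]
    have e : ∑ j ∈ Finset.Icc 1 n, q ^ j * (((n + 1 : ℕ) : ℝ) - j) =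
        ∑ j ∈ Finset.Icc 1 n, q ^ j * ((n : ℝ) - j) + ∑ j ∈ Finset.Icc 1 n, q ^ j := by
      rw [← Finset.sum_add_distrib]
      refine Finset.sum_congr rfl fun j _ => ?_
      push_cast
      ring
    have h2 := geom_sum_le q hq n
    have h3 : q / (q - 1) * q ^ n ≤ q / (q - 1) * q ^ (n + 1) := by
      have : q ^ n ≤ q ^ (n + 1) := pow_le_pow_right₀ hq.le (by omega)
      gcongr
    rw [e, sub_self, mul_zero, mul_add]
    linarith

/-- If `x j = -D j + O(M)` with `D ≥ 0`, then the mean of `x` over `1 ≤ j ≤ J` with weights `q ^ j`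
is `-D J + O(1)`. -/
theorem abs_weighted_mean_le (q : ℝ) (hq : 1 < q) (D M : ℝ) (hD : 0 ≤ D) (x : ℕ → ℝ)
    (hx : ∀ j, 1 ≤ j → |x j + D * j| ≤ M) (J : ℕ) (hJ : 1 ≤ J) :
    |(∑ j ∈ Finset.Icc 1 J, q ^ j * x j) / (∑ j ∈ Finset.Icc 1 J, q ^ j) + D * J| ≤
      M + D * (q / (q - 1)) := by
  have hS : 0 < ∑ j ∈ Finset.Icc 1 J, q ^ j :=
    Finset.sum_pos (fun j _ => by positivity) ⟨1, by simp [hJ]⟩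
  have e : (∑ j ∈ Finset.Icc 1 J, q ^ j * x j) / (∑ j ∈ Finset.Icc 1 J, q ^ j) + D * J =
      (∑ j ∈ Finset.Icc 1 J, q ^ j * (x j + D * j) +
        D * ∑ j ∈ Finset.Icc 1 J, q ^ j * ((J : ℝ) - j)) / ∑ j ∈ Finset.Icc 1 J, q ^ j := by
    rw [eq_div_iff hS.ne', add_mul, div_mul_cancel₀ _ hS.ne', Finset.mul_sum, Finset.mul_sum,
      ← Finset.sum_add_distrib, ← Finset.sum_add_distrib]
    refine Finset.sum_congr rfl fun j _ => ?_
    ring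
  rw [e, abs_div, abs_of_pos hS, div_le_iff₀ hS, add_mul]
  refine (abs_add_le _ _).trans (add_le_add ?_ ?_)
  · refine (Finset.abs_sum_le_sum_abs _ _).trans ?_
    rw [Finset.mul_sum]
    refine Finset.sum_le_sum fun j hj => ?_
    rw [abs_mul, abs_of_pos (by positivity), mul_comm]
    have := hx j (Finset.mem_Icc.1 hj).1
    gcongr
  · have hT : 0 ≤ ∑ j ∈ Finset.Icc 1 J, q ^ j * ((J : ℝ) - j) := by
      refine Finset.sum_nonneg fun j hj => ?_
      have : (j : ℝ) ≤ J := by exact_mod_cast (Finset.mem_Icc.1 hj).2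
      have : 0 ≤ (J : ℝ) - j := by linarith
      positivity
    rw [abs_of_nonneg (by positivity), mul_assoc]
    exact mul_le_mul_of_nonneg_left (geom_deficit_le q hq J) hD

theorem abs_log_geom_sum_le (q : ℝ) (hq : 1 < q) (J : ℕ) (hJ : 1 ≤ J) :
    |log (∑ j ∈ Finset.Icc 1 J, q ^ j) - J * log q| ≤ log (q / (q - 1)) := by
  have h1 : 0 < q - 1 := by linarith
  have hlow : q ^ J ≤ ∑ j ∈ Finset.Icc 1 J, q ^ j :=
    Finset.single_le_sum (f := fun j => q ^ j) (fun j _ => by positivity) (by simp [hJ])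
  have hJp : 0 < q ^ J := by positivity
  have a := log_le_log hJp hlow
  have b := log_le_log (hJp.trans_le hlow) (geom_sum_le q hq J)
  rw [log_mul (by positivity) (by positivity)] at b
  rw [log_pow] at a b
  have c : 0 ≤ log (q / (q - 1)) := log_nonneg (by rw [le_div_iff₀ h1]; linarith)
  rw [abs_le]
  constructor <;> linarith

/-- Partial sums of a positive sequence dominated by a convergent geometric series have bounded
logarithm. -/
theorem log_weighted_sum_bounded (p A : ℝ) (hp : 0 ≤ p) (hp1 : p < 1) (u : ℕ → ℝ)
    (hu : ∀ j, 1 ≤ j → 0 < u j) (hA : 0 ≤ A) (huA : ∀ j, 1 ≤ j → u j ≤ A * p ^ j) :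
    ∃ C : ℝ, ∀ J, 1 ≤ J → |log (∑ j ∈ Finset.Icc 1 J, u j)| ≤ C := by
  refine ⟨max |log (u 1)| |log (A * (1 - p)⁻¹)|, fun J hJ => ?_⟩
  have hlow : u 1 ≤ ∑ j ∈ Finset.Icc 1 J, u j :=
    Finset.single_le_sum (f := u) (fun j hj => (hu j (Finset.mem_Icc.1 hj).1).le) (by simp [hJ])
  have hup : ∑ j ∈ Finset.Icc 1 J, u j ≤ A * (1 - p)⁻¹ := by
    calc ∑ j ∈ Finset.Icc 1 J, u j ≤ ∑ j ∈ Finset.Icc 1 J, A * p ^ j :=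
          Finset.sum_le_sum fun j hj => huA j (Finset.mem_Icc.1 hj).1
      _ = A * ∑ j ∈ Finset.Icc 1 J, p ^ j := by rw [Finset.mul_sum]
      _ ≤ A * (1 - p)⁻¹ := by
          refine mul_le_mul_of_nonneg_left ?_ hA
          rw [← tsum_geometric_of_lt_one hp hp1]
          exact (summable_geometric_of_lt_one hp hp1).sum_le_tsum _ fun j _ => by positivity
  have h1 := hu 1 le_rfl
  exact abs_le_max_abs_abs (log_le_log h1 hlow) (log_le_log (h1.trans_le hlow) hup)

/-- On the support of `b (l / B ^ j)` the factor `l ^ (-d)` lies within `B ^ (± d)` of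
`B ^ (-d j)`. -/
theorem term_bounds (B : ℝ) (hB : 1 < B) (b : ℝ → ℝ)
    (hsupp : Function.support b ⊆ Set.Icc B⁻¹ B) (α α₀ : ℝ) (hd : 0 ≤ α₀ - α) (j : ℕ) (l : ℕ+) :
    B ^ (-(α₀ - α) * (j + 1)) *
        ((b ((l : ℝ) / B ^ (j : ℕ))) ^ 2 * (2 * (l : ℝ) + 1) * (l : ℝ) ^ (-α)) ≤
      (b ((l : ℝ) / B ^ (j : ℕ))) ^ 2 * (2 * (l : ℝ) + 1) * (l : ℝ) ^ (-α₀) ∧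
    (b ((l : ℝ) / B ^ (j : ℕ))) ^ 2 * (2 * (l : ℝ) + 1) * (l : ℝ) ^ (-α₀) ≤
      B ^ (-(α₀ - α) * (j - 1)) *
        ((b ((l : ℝ) / B ^ (j : ℕ))) ^ 2 * (2 * (l : ℝ) + 1) * (l : ℝ) ^ (-α)) := by
  have hB0 : 0 < B := by linarith
  have hl : (0 : ℝ) < l := by exact_mod_cast l.pos
  by_cases h0 : b ((l : ℝ) / B ^ (j : ℕ)) = 0
  · simp [h0]
  obtain ⟨h1, h2⟩ := hsupp h0
  have hBj : 0 < B ^ j := by positivity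
  have lo : B ^ ((j : ℝ) - 1) ≤ l := by
    rw [le_div_iff₀ hBj] at h1
    rw [rpow_sub hB0, rpow_natCast, rpow_one, div_eq_inv_mul]
    exact h1
  have hi : (l : ℝ) ≤ B ^ ((j : ℝ) + 1) := by
    rw [div_le_iff₀ hBj] at h2
    rw [rpow_add hB0, rpow_natCast, rpow_one, mul_comm]
    exact h2
  have e : (l : ℝ) ^ (-α₀) = (l : ℝ) ^ (-(α₀ - α)) * (l : ℝ) ^ (-α) := by
    rw [← rpow_add hl]
    congr 1
    ring
  have a1 : B ^ (-(α₀ - α) * (j + 1)) ≤ (l : ℝ) ^ (-(α₀ - α)) := by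
    rw [mul_comm, rpow_mul hB0.le]
    exact rpow_le_rpow_of_nonpos hl hi (by linarith)
  have a2 : (l : ℝ) ^ (-(α₀ - α)) ≤ B ^ (-(α₀ - α) * (j - 1)) := by
    rw [mul_comm, rpow_mul hB0.le]
    exact rpow_le_rpow_of_nonpos (by positivity) lo (by linarith)
  have hw : 0 ≤ (b ((l : ℝ) / B ^ (j : ℕ))) ^ 2 * (2 * (l : ℝ) + 1) * (l : ℝ) ^ (-α) := by
    positivity
  have e2 : (b ((l : ℝ) / B ^ (j : ℕ))) ^ 2 * (2 * (l : ℝ) + 1) * (l : ℝ) ^ (-α₀) =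
      (l : ℝ) ^ (-(α₀ - α)) *
        ((b ((l : ℝ) / B ^ (j : ℕ))) ^ 2 * (2 * (l : ℝ) + 1) * (l : ℝ) ^ (-α)) := by
    rw [e]
    ring
  rw [e2]
  exact ⟨mul_le_mul_of_nonneg_right a1 hw, mul_le_mul_of_nonneg_right a2 hw⟩

theorem summable_Kfun (B : ℝ) (hB : 1 < B) (b : ℝ → ℝ)
    (hsupp : Function.support b ⊆ Set.Icc B⁻¹ B) (α : ℝ) (j : ℕ) :
    Summable fun l : ℕ+ =>
      (b ((l : ℝ) / B ^ (j : ℕ))) ^ 2 * (2 * (l : ℝ) + 1) * (l : ℝ) ^ (-α) := by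
  have hBj : 0 < B ^ j := by positivity
  obtain ⟨N, hN⟩ := exists_nat_ge (B * B ^ j)
  refine summable_of_hasFiniteSupport ((Set.finite_Iic N.succPNat).subset fun l hl => ?_)
  have h0 : b ((l : ℝ) / B ^ (j : ℕ)) ≠ 0 := fun h => hl (by simp [h])
  have h2 := (div_le_iff₀ hBj).1 (hsupp h0).2
  have h3 : (l : ℕ) ≤ N := by exact_mod_cast h2.trans hN
  have h4 : (l : ℕ) ≤ (N.succPNat : ℕ) := by
    rw [Nat.succPNat_coe]
    omega
  exact h4

theorem abs_log_ratio_le (B : ℝ) (hB : 1 < B) (b : ℝ → ℝ)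
    (hsupp : Function.support b ⊆ Set.Icc B⁻¹ B) (α α₀ : ℝ) (hd : 0 ≤ α₀ - α) (j : ℕ)
    (hK : 0 < Kfun B b j α) (hK0 : 0 < Kfun B b j α₀) :
    |log (Kfun B b j α₀ / Kfun B b j α) + (α₀ - α) * log B * j| ≤ (α₀ - α) * log B := by
  have hB0 : 0 < B := by linarith
  have s := summable_Kfun B hB b hsupp α j
  have s0 := summable_Kfun B hB b hsupp α₀ j
  have t := term_bounds B hB b hsupp α α₀ hd j
  have hpre : 0 ≤ B ^ (-(2 * (j : ℝ))) := by positivity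
  have lo : B ^ (-(α₀ - α) * (j + 1)) * Kfun B b j α ≤ Kfun B b j α₀ := by
    unfold Kfun
    rw [mul_left_comm, ← tsum_mul_left]
    exact mul_le_mul_of_nonneg_left ((s.mul_left _).tsum_le_tsum (fun l => (t l).1) s0) hpre
  have hi : Kfun B b j α₀ ≤ B ^ (-(α₀ - α) * (j - 1)) * Kfun B b j α := by
    unfold Kfun
    rw [mul_left_comm, ← tsum_mul_left (a := B ^ (-(α₀ - α) * ((j : ℝ) - 1)))]
    exact mul_le_mul_of_nonneg_left (s0.tsum_le_tsum (fun l => (t l).2) (s.mul_left _)) hpre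
  have a := log_le_log (by positivity) ((le_div_iff₀ hK).2 lo)
  have c := log_le_log (by positivity) ((div_le_iff₀ hK).2 hi)
  rw [log_rpow hB0] at a c
  rw [abs_le]
  constructor <;> linarith

theorem U_limit_case_lt (B : ℝ) (hB : 1 < B) (b : ℝ → ℝ) (hb : Continuous b)
    (hsupp : Function.support b ⊆ Set.Icc B⁻¹ B)
    (hbpos : ∀ x ∈ Set.Ioo B⁻¹ B, 0 < b x)
    (α α₀ : ℝ) (hdiff : α - α₀ < -2)
    (hK : ∀ j : ℕ, 1 ≤ j → 0 < Kfun B b j α)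
    (hK0 : ∀ j : ℕ, 1 ≤ j → 0 < Kfun B b j α₀) :
    Tendsto (fun J : ℕ =>
      (1 / (2 * (J : ℝ) * Real.log B)) *
        (Real.log ((∑ j ∈ Finset.Icc 1 J, B ^ (2 * (j : ℝ)) * (Kfun B b j α₀ / Kfun B b j α)) /
            (∑ j ∈ Finset.Icc 1 J, B ^ (2 * (j : ℝ)))) -
          (∑ j ∈ Finset.Icc 1 J, B ^ (2 * (j : ℝ)) * Real.log (Kfun B b j α₀ / Kfun B b j α)) /
            (∑ j ∈ Finset.Icc 1 J, B ^ (2 * (j : ℝ)))))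
      atTop (𝓝 ((α₀ - α) / 2 - 1)) ∧ 0 < (α₀ - α) / 2 - 1 := by
  have hB0 : 0 < B := by linarith
  have hL : 0 < log B := log_pos hB
  refine ⟨?_, by linarith⟩
  have hw : ∀ j : ℕ, B ^ (2 * (j : ℝ)) = (B ^ 2) ^ j := fun j => by
    rw [← pow_mul, ← rpow_natCast]
    push_cast
    rfl
  simp only [hw]
  have hq : 1 < B ^ 2 := one_lt_pow₀ hB (by norm_num)
  have hd : 0 ≤ α₀ - α := by linarith
  set r : ℕ → ℝ := fun j => Kfun B b j α₀ / Kfun B b j α with hr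
  have hrpos : ∀ j, 1 ≤ j → 0 < r j := fun j hj => div_pos (hK0 j hj) (hK j hj)
  have hlr : ∀ j, 1 ≤ j → |log (r j) + (α₀ - α) * log B * j| ≤ (α₀ - α) * log B :=
    fun j hj => abs_log_ratio_le B hB b hsupp α α₀ hd j (hK j hj) (hK0 j hj)
  obtain ⟨C, hC⟩ := log_weighted_sum_bounded (B ^ (2 - (α₀ - α))) (B ^ (α₀ - α)) (by positivity)
    (rpow_lt_one_of_one_lt_of_neg hB (by linarith)) (fun j => (B ^ 2) ^ j * r j)
    (fun j hj => mul_pos (by positivity) (hrpos j hj)) (by positivity) (fun j hj => by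
      have h1 := (abs_le.1 (hlr j hj)).2
      have h2 : 0 < (B ^ 2) ^ j * r j := mul_pos (by positivity) (hrpos j hj)
      rw [← log_le_log_iff h2 (by positivity), log_mul (by positivity) (hrpos j hj).ne',
        log_mul (by positivity) (by positivity), log_pow, log_pow, log_pow, log_rpow hB0,
        log_rpow hB0]
      push_cast
      linarith)
  set E : ℕ → ℝ := fun J =>
    Real.log ((∑ j ∈ Finset.Icc 1 J, (B ^ 2) ^ j * r j) / (∑ j ∈ Finset.Icc 1 J, (B ^ 2) ^ j)) -
      (∑ j ∈ Finset.Icc 1 J, (B ^ 2) ^ j * Real.log (r j)) /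
        (∑ j ∈ Finset.Icc 1 J, (B ^ 2) ^ j) with hE
  change Tendsto (fun J : ℕ => 1 / (2 * (J : ℝ) * log B) * E J) atTop _
  obtain ⟨M, hM⟩ : ∃ M : ℝ, ∀ J : ℕ, 1 ≤ J → |E J - (α₀ - α - 2) * log B * J| ≤ M := by
    refine ⟨C + log (B ^ 2 / (B ^ 2 - 1)) +
      ((α₀ - α) * log B + (α₀ - α) * log B * (B ^ 2 / (B ^ 2 - 1))), fun J hJ => ?_⟩
    have h1 := hC J hJ
    have h2 := abs_log_geom_sum_le (B ^ 2) hq J hJ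
    have h3 := abs_weighted_mean_le (B ^ 2) hq ((α₀ - α) * log B) ((α₀ - α) * log B)
      (by positivity) (fun j => log (r j)) hlr J hJ
    have hne : (Finset.Icc 1 J).Nonempty := ⟨1, by simp [hJ]⟩
    have p1 : 0 < ∑ j ∈ Finset.Icc 1 J, (B ^ 2) ^ j * r j :=
      Finset.sum_pos (fun j hj => mul_pos (by positivity) (hrpos j (Finset.mem_Icc.1 hj).1)) hne
    have p2 : 0 < ∑ j ∈ Finset.Icc 1 J, (B ^ 2) ^ j :=
      Finset.sum_pos (fun j _ => by positivity) hne
    simp only [hE]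
    rw [log_div p1.ne' p2.ne']
    rw [log_pow] at h2
    push_cast at h2
    rw [abs_le] at *
    constructor <;> linarith [h1.1, h1.2, h2.1, h2.2, h3.1, h3.2]
  have hlim : Tendsto (fun J : ℕ => M / (2 * log B) / (J : ℝ)) atTop (𝓝 0) :=
    tendsto_const_div_atTop_nhds_zero_nat _
  rw [tendsto_iff_norm_sub_tendsto_zero]
  refine squeeze_zero' (Eventually.of_forall fun J => norm_nonneg _) ?_ hlim
  filter_upwards [eventually_ge_atTop 1] with J hJ
  have hJ0 : (0 : ℝ) < J := by exact_mod_cast hJ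
  have e : 1 / (2 * (J : ℝ) * log B) * E J - ((α₀ - α) / 2 - 1) =
      (E J - (α₀ - α - 2) * log B * J) / (2 * log B * J) := by
    field_simp
  rw [e, norm_eq_abs, abs_div, abs_of_pos (show 0 < 2 * log B * J by positivity), div_div]
  exact div_le_div_of_nonneg_right (hM J hJ) (by positivity)
end

section
/- One has lim_{j→∞} 2 B^{(2α₀ − 2) j} ∑_{l=1}^∞ b(l/B^j)⁴ (2l+1) C_l² = 4 G₀² ∫_{B⁻¹}^{B} b(x)⁴ x^{1 − 2α₀} dx, the limit being taken along the positive integers j; here the sum runs over positive integers l and is finite because b has compact support. -/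
/-!
The series is a Riemann sum of mesh `1 / N`, where `N = B ^ j`. Writing `x = l / N`, the `l`-th
term equals `N ^ (1 - 2α₀) * g x * (2 x + 1 / N) * G l ^ 2`, where `g x = b x ^ 4 * x ^ (-2α₀)`
is continuous with compact support inside `(0, ∞)`. After multiplication by `2 N ^ (2α₀ - 2)`
the series becomes `2` times the integral over `(0, B + 1]` of the step function
`t ↦ g x * (2 x + 1 / N) * G l ^ 2` with `l = ⌈N t⌉` and `x = l / N`
(`inv_mul_tsum_eq_integral`). For each `t > 0` we have `l → ∞` and `x → t`, so the step functions
converge pointwise to `g t * 2 t * G₀ ^ 2`; they are uniformly bounded because `g` and `G` are,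
and dominated convergence gives the limit.
-/

open Real Filter Topology

namespace NeedletVariance

open MeasureTheory

lemma sum_eq_integral_ceil (f : ℕ → ℝ) (M : ℕ) :
    ∑ i ∈ Finset.range M, f (i + 1) = ∫ t in (0 : ℝ)..M, f ⌈t⌉₊ := by
  have hc : ∀ i : ℕ, ∀ t ∈ Set.uIoc (i : ℝ) ((i + 1 : ℕ) : ℝ), f (i + 1) = f ⌈t⌉₊ := by
    intro i t ht
    rw [Set.uIoc_of_le (by push_cast; linarith)] at ht
    have : ⌈t⌉₊ = i + 1 := by
      rw [Nat.ceil_eq_iff (by omega)]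
      simpa using ht
    rw [this]
  have hint : ∀ i < M, IntervalIntegrable (fun t : ℝ => f ⌈t⌉₊) volume
      ((i : ℕ) : ℝ) ((i + 1 : ℕ) : ℝ) := fun i _ =>
    (intervalIntegrable_const (c := f (i + 1))).congr (fun t ht => hc i t ht)
  have h := intervalIntegral.sum_integral_adjacent_intervals (a := fun i : ℕ => (i : ℝ)) hint
  simp only [Nat.cast_zero] at h
  rw [← h]
  refine Finset.sum_congr rfl fun i _ => ?_
  rw [intervalIntegral.integral_congr_ae (Eventually.of_forall fun t ht => (hc i t ht).symm)]
  simp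

/-- A series whose terms vanish beyond `N * B`, scaled by the mesh `1 / N`, is the integral of a
step function over the fixed interval `(0, B + 1]`; the extra unit of length absorbs the rounding
of `N * B` up to an integer. -/
lemma inv_mul_tsum_eq_integral (f : ℕ → ℝ) (N B : ℝ) (hN : 1 ≤ N) (hB : 0 < B)
    (hf : ∀ l : ℕ, N * B < l → f l = 0) :
    N⁻¹ * ∑' l : ℕ+, f l = ∫ t in Set.Ioc 0 (B + 1), f ⌈N * t⌉₊ := by
  have hN0 : 0 < N := by linarith
  set M := ⌈N * B⌉₊ with hM
  have hMB : N * B ≤ M := Nat.le_ceil _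
  have hM1 : (M : ℝ) < N * B + 1 := Nat.ceil_lt_add_one (by positivity)
  rw [tsum_pnat_eq_tsum_succ (f := f), tsum_eq_sum (s := Finset.range M), sum_eq_integral_ceil]
  · have h := intervalIntegral.integral_comp_mul_left (a := 0) (b := M / N)
      (fun t : ℝ => f ⌈t⌉₊) hN0.ne'
    rw [mul_zero, mul_div_cancel₀ _ hN0.ne', smul_eq_mul] at h
    rw [← h, intervalIntegral.integral_of_le (by positivity)]
    symm
    apply setIntegral_eq_of_subset_of_forall_sdiff_eq_zero measurableSet_Ioc
    · apply Set.Ioc_subset_Ioc_right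
      rw [div_le_iff₀ hN0]
      nlinarith
    · rintro t ⟨ht, ht'⟩
      apply hf
      have : M / N < t := by
        by_contra! hcon
        exact ht' ⟨ht.1, hcon⟩
      rw [div_lt_iff₀ hN0] at this
      have := Nat.le_ceil (N * t)
      linarith
  · intro i hi
    apply hf
    have : (M : ℝ) ≤ i := by exact_mod_cast (by simpa using hi : M ≤ i)
    push_cast
    linarith

/-- The profile `b x ^ 4 * x ^ (-2 α)`, with the base of the power truncated below at `B⁻¹`.
The truncation changes nothing where `b ≠ 0` and makes the function continuous on all of `ℝ`. -/
noncomputable def profile (B : ℝ) (b : ℝ → ℝ) (α x : ℝ) : ℝ :=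
  b x ^ 4 * (max x B⁻¹) ^ (-(2 * α))

lemma continuous_profile {B : ℝ} (hB : 1 < B) {b : ℝ → ℝ} (hb : Continuous b) (α : ℝ) :
    Continuous (profile B b α) := by
  unfold profile
  refine (hb.pow 4).mul (Continuous.rpow_const (by fun_prop) fun x => Or.inl ?_)
  have : 0 < max x B⁻¹ := lt_max_of_lt_right (by positivity)
  exact this.ne'

lemma eq_zero_of_notMem {B : ℝ} {b : ℝ → ℝ} (hsupp : Function.support b ⊆ Set.Icc B⁻¹ B)
    {x : ℝ} (hx : x ∉ Set.Icc B⁻¹ B) : b x = 0 := by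
  by_contra h
  exact hx (hsupp h)

lemma profile_eq {B : ℝ} {b : ℝ → ℝ} (hsupp : Function.support b ⊆ Set.Icc B⁻¹ B) (α x : ℝ) :
    profile B b α x = b x ^ 4 * x ^ (-(2 * α)) := by
  unfold profile
  by_cases hx : x ∈ Set.Icc B⁻¹ B
  · rw [max_eq_left hx.1]
  · simp [eq_zero_of_notMem hsupp hx]

lemma profile_eq_zero {B : ℝ} {b : ℝ → ℝ} (hsupp : Function.support b ⊆ Set.Icc B⁻¹ B) (α : ℝ)
    {x : ℝ} (hx : x ∉ Set.Icc B⁻¹ B) : profile B b α x = 0 := by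
  simp [profile, eq_zero_of_notMem hsupp hx]

/-- The `l`-th term of the series after rescaling by the powers of `N`. -/
noncomputable def term (B : ℝ) (b : ℝ → ℝ) (α : ℝ) (G : ℕ → ℝ) (N : ℝ) (l : ℕ) : ℝ :=
  profile B b α (l / N) * (2 * (l / N) + N⁻¹) * G l ^ 2

lemma rescale_term {B : ℝ} {b : ℝ → ℝ} (hsupp : Function.support b ⊆ Set.Icc B⁻¹ B) (α : ℝ)
    (G : ℕ → ℝ) {N : ℝ} (hN : 0 < N) {l : ℕ} (hl : 0 < l) :
    N ^ (2 * α - 2) * (b (l / N) ^ 4 * (2 * (l : ℝ) + 1) * ((l : ℝ) ^ (-α) * G l) ^ 2)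
      = N⁻¹ * term B b α G N l := by
  have hl0 : (0 : ℝ) < l := by exact_mod_cast hl
  rw [term, profile_eq hsupp, Real.div_rpow hl0.le hN.le, mul_pow, ← Real.rpow_mul_natCast hl0.le,
    Real.rpow_sub hN, Real.rpow_neg hN.le]
  have e : -α * ((2 : ℕ) : ℝ) = -(2 * α) := by push_cast; ring
  rw [e, Real.rpow_two]
  have := (Real.rpow_pos_of_pos hN (2 * α)).ne'
  field_simp

lemma tendsto_integral_term {B : ℝ} (hB : 1 < B) {b : ℝ → ℝ} (hb : Continuous b)
    (hsupp : Function.support b ⊆ Set.Icc B⁻¹ B) (α G₀ : ℝ) {G : ℕ → ℝ}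
    (hG : Tendsto G atTop (𝓝 G₀)) :
    Tendsto (fun j : ℕ => ∫ t in Set.Ioc 0 (B + 1), term B b α G (B ^ j) ⌈B ^ j * t⌉₊) atTop
      (𝓝 (∫ t in Set.Ioc 0 (B + 1), profile B b α t * (2 * t) * G₀ ^ 2)) := by
  have hB0 : 0 < B := by linarith
  have hcont := continuous_profile hB hb α
  obtain ⟨C, hC⟩ := (isCompact_Icc (a := B⁻¹) (b := B)).exists_bound_of_continuousOn
    hcont.continuousOn
  obtain ⟨D, hD⟩ := hG.norm.bddAbove_range
  have hD : ∀ l, ‖G l‖ ≤ D := fun l => hD ⟨l, rfl⟩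
  have hC0 : 0 ≤ C := (norm_nonneg _).trans
    (hC B ⟨(inv_le_one_of_one_le₀ hB.le).trans hB.le, le_rfl⟩)
  have hpow : Tendsto (fun j : ℕ => B ^ j) atTop atTop := tendsto_pow_atTop_atTop_of_one_lt hB
  have hinv : Tendsto (fun j : ℕ => (B ^ j)⁻¹) atTop (𝓝 0) := tendsto_inv_atTop_zero.comp hpow
  refine tendsto_integral_of_dominated_convergence (fun _ => C * (2 * B + 1) * D ^ 2)
    ?_ ?_ ?_ ?_
  · intro j
    have h1 : Measurable (term B b α G (B ^ j)) := measurable_from_top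
    exact (h1.comp (Nat.measurable_ceil.comp (measurable_const_mul (B ^ j)))).aestronglyMeasurable
  · exact integrable_const _
  · intro j
    refine Eventually.of_forall fun t => ?_
    have hN : 1 ≤ B ^ j := one_le_pow₀ hB.le
    unfold term
    set l := ⌈B ^ j * t⌉₊
    set x : ℝ := l / B ^ j
    by_cases hx : x ∈ Set.Icc B⁻¹ B
    · have hx0 : 0 ≤ x := by positivity
      have hi : (B ^ j)⁻¹ ≤ 1 := inv_le_one_of_one_le₀ hN
      rw [norm_mul, norm_mul, norm_pow, Real.norm_of_nonneg (by positivity : 0 ≤ 2 * x + (B ^ j)⁻¹)]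
      gcongr
      · exact hC x hx
      · exact hx.2
      · exact hD l
    · rw [profile_eq_zero hsupp α hx]
      simp only [zero_mul, norm_zero]
      positivity
  · refine (ae_restrict_iff' measurableSet_Ioc).2 (Eventually.of_forall fun t ht => ?_)
    have hl : Tendsto (fun j : ℕ => ⌈B ^ j * t⌉₊) atTop atTop :=
      tendsto_nat_ceil_atTop.comp (hpow.atTop_mul_const ht.1)
    have hx : Tendsto (fun j : ℕ => (⌈B ^ j * t⌉₊ : ℝ) / B ^ j) atTop (𝓝 t) := by
      have := (tendsto_nat_ceil_mul_div_atTop ht.1.le).comp hpow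
      refine this.congr fun j => ?_
      simp [mul_comm]
    have := (((hcont.tendsto t).comp hx).mul ((hx.const_mul 2).add hinv)).mul ((hG.comp hl).pow 2)
    simpa [term, Function.comp_def] using this

lemma integral_limit_eq {B : ℝ} (hB : 1 < B) {b : ℝ → ℝ}
    (hsupp : Function.support b ⊆ Set.Icc B⁻¹ B) (α G₀ : ℝ) :
    2 * ∫ t in Set.Ioc 0 (B + 1), profile B b α t * (2 * t) * G₀ ^ 2
      = 4 * G₀ ^ 2 * ∫ x in B⁻¹..B, b x ^ 4 * x ^ (1 - 2 * α) := by
  have hBi : 0 < B⁻¹ := by positivity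
  have h1 : B⁻¹ ≤ B := (inv_le_one_of_one_le₀ hB.le).trans hB.le
  have h : ∀ t ∈ Set.Ioc 0 (B + 1), profile B b α t * (2 * t) * G₀ ^ 2
      = 2 * G₀ ^ 2 * (b t ^ 4 * t ^ (1 - 2 * α)) := by
    intro t ht
    rw [profile_eq hsupp, sub_eq_add_neg, Real.rpow_add ht.1, Real.rpow_one]
    ring
  rw [setIntegral_congr_fun measurableSet_Ioc h, integral_const_mul,
    intervalIntegral.integral_of_le h1, ← integral_Icc_eq_integral_Ioc (x := B⁻¹),
    setIntegral_eq_of_subset_of_forall_sdiff_eq_zero (s := Set.Icc B⁻¹ B) measurableSet_Ioc]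
  · ring
  · intro x hx
    exact ⟨hBi.trans_le hx.1, by linarith [hx.2]⟩
  · rintro x ⟨-, hx⟩
    simp [eq_zero_of_notMem hsupp hx]

end NeedletVariance

open NeedletVariance in
theorem needlet_variance_limit (B : ℝ) (hB : 1 < B) (b : ℝ → ℝ) (hb : Continuous b)
    (hsupp : Function.support b ⊆ Set.Icc B⁻¹ B)
    (α₀ G₀ : ℝ) (G : ℕ → ℝ) (hG : Tendsto G atTop (𝓝 G₀)) :
    Tendsto (fun j : ℕ =>
      2 * B ^ ((2 * α₀ - 2) * (j : ℝ)) *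
        ∑' l : ℕ+, (b ((l : ℝ) / B ^ (j : ℕ))) ^ 4 * (2 * (l : ℝ) + 1) *
          ((l : ℝ) ^ (-α₀) * G l) ^ 2)
      atTop (𝓝 (4 * G₀ ^ 2 * ∫ x in B⁻¹..B, (b x) ^ 4 * x ^ (1 - 2 * α₀))) := by
  rw [← integral_limit_eq hB hsupp]
  refine ((tendsto_integral_term hB hb hsupp α₀ G₀ hG).const_mul 2).congr fun j => ?_
  have hB0 : 0 < B := by linarith
  have hN : 1 ≤ B ^ j := one_le_pow₀ hB.le
  have hN0 : 0 < B ^ j := by positivity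
  rw [← inv_mul_tsum_eq_integral _ _ B hN hB0, mul_assoc]
  · congr 1
    rw [← tsum_mul_left, ← tsum_mul_left]
    refine tsum_congr fun l => ?_
    rw [mul_comm (2 * α₀ - 2), Real.rpow_natCast_mul hB0.le]
    exact (rescale_term hsupp α₀ G hN0 l.pos).symm
  · intro l hl
    have : (l : ℝ) / B ^ j ∉ Set.Icc B⁻¹ B := fun h => by
      have := h.2
      rw [div_le_iff₀ hN0] at this
      linarith
    simp [term, profile_eq_zero hsupp α₀ this]
end

section
/- One has lim_{j→∞} 2 B^{(2α₀ − 2) j} ∑_{l=1}^∞ b(l/B^j)² b(l/B^{j+1})² (2l+1) C_l² = 4 G₀² ∫_{1}^{B} b(x)² b(x/B)² x^{1 − 2α₀} dx, the limit being taken along the positive integers j; here the sum runs over positive integers l and is finite because b has compact support. -/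
/-!
Put `N = B ^ j` and `x = l / N`. Each term of the rescaled sum equals
`N⁻¹ * h x * (G l ^ 2 * (4 + 2 / l))`, where `h x = b x ^ 2 * b (x / B) ^ 2 * x ^ (1 - 2 α₀)`, and the
two bumps `b x` and `b (x / B)` are simultaneously nonzero only for `x ∈ [1, B]`. So the sum is a
Riemann sum of mesh `N⁻¹` for `h`, weighted by a sequence that converges to `4 G₀ ^ 2`.
On the support of `h` one has `l ≥ N`, so the weight is uniformly close to its limit
there, and the convergence of the weighted Riemann sums (`tendsto_weighted_riemann_sum`) follows
from the uniform continuity of `h`.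
-/

open Real Filter Topology

/-- Riemann sums of real mesh `(N j)⁻¹ → 0` for a continuous function supported in `[1, B]`, with
weights `g l` at the nodes `l / N j`. Since the support stays away from `0`, only weights with
`l ≥ N j` matter, and they may be replaced by their limit. -/
theorem tendsto_weighted_riemann_sum {B : ℝ} (hB : 1 < B) {h : ℝ → ℝ} (hc : Continuous h)
    (hs : Function.support h ⊆ Set.Icc 1 B) {g : ℕ → ℝ} {L : ℝ} (hg : Tendsto g atTop (𝓝 L))
    {N : ℕ → ℝ} (hN : Tendsto N atTop atTop) :
    Tendsto (fun j => (N j)⁻¹ * ∑' l : ℕ+, h ((l : ℝ) / N j) * g l) atTop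
      (𝓝 (L * ∫ x in (1 : ℝ)..B, h x)) := by
  have h0 : ∀ x, x ∉ Set.Icc 1 B → h x = 0 := fun x hx => by
    by_contra h1
    exact hx (hs h1)
  have hcs : HasCompactSupport h := HasCompactSupport.intro isCompact_Icc h0
  have huc : UniformContinuous h := hcs.uniformContinuous_of_continuous hc
  obtain ⟨M, hM⟩ := hcs.exists_bound_of_continuous hc
  have hM0 : 0 ≤ M := (norm_nonneg _).trans (hM 0)
  rw [Metric.tendsto_atTop]
  intro ε hε
  have hD : 0 < (M + |L| + 1) * (B + 1) := by positivity
  set δ := ε / ((M + |L| + 1) * (B + 1)) / 2 with hδ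
  have hδ0 : 0 < δ := by positivity
  obtain ⟨η, hη, hhη⟩ := Metric.uniformContinuous_iff.1 huc δ hδ0
  obtain ⟨l₀, hl₀⟩ := Metric.tendsto_atTop.1 hg δ hδ0
  obtain ⟨J, hJ⟩ := eventually_atTop.1 (hN.eventually
    ((eventually_ge_atTop (1 : ℝ)).and ((eventually_ge_atTop (l₀ : ℝ)).and
      (eventually_gt_atTop η⁻¹))))
  refine ⟨J, fun j hj => ?_⟩
  obtain ⟨hN1, hNl, hNη⟩ := hJ j hj
  set n := N j
  have hn : 0 < n := by linarith
  have hnη : n⁻¹ < η := inv_lt_of_inv_lt₀ hη hNη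
  -- `K / n` is the first node that is at least `B`.
  set K := ⌈B * n⌉₊ with hK
  have hK1 : B * n ≤ K := Nat.le_ceil _
  have hK2 : (K : ℝ) ≤ (B + 1) * n := by
    have := Nat.ceil_lt_add_one (a := B * n) (by positivity)
    nlinarith
  have e1 : ∑' l : ℕ+, h ((l : ℝ) / n) * g l
      = ∑ l ∈ Finset.range K, h (((l + 1 : ℕ) : ℝ) / n) * g (l + 1) := by
    rw [tsum_pnat_eq_tsum_succ (f := fun l : ℕ => h ((l : ℝ) / n) * g l)]
    apply tsum_eq_sum
    intro l hl
    rw [h0, zero_mul]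
    rintro ⟨-, h2⟩
    rw [div_le_iff₀ hn] at h2
    have : (K : ℝ) ≤ l := by exact_mod_cast (by simpa using hl)
    push_cast at h2
    linarith
  have e2 : ∫ x in (1 : ℝ)..B, h x
      = ∑ l ∈ Finset.range K, ∫ x in ((l : ℝ) / n)..(((l + 1 : ℕ) : ℝ) / n), h x := by
    rw [intervalIntegral.sum_integral_adjacent_intervals (a := fun l : ℕ => (l : ℝ) / n)
      (fun k _ => hc.intervalIntegrable _ _),
      intervalIntegral.integral_of_le hB.le, ← MeasureTheory.integral_Icc_eq_integral_Ioc,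
      MeasureTheory.setIntegral_eq_integral_of_forall_compl_eq_zero h0,
      intervalIntegral.integral_eq_integral_of_support_subset]
    intro x hx
    have := hs hx
    refine ⟨by simpa using zero_lt_one.trans_le this.1, this.2.trans ?_⟩
    rwa [le_div_iff₀ hn]
  rw [e1, e2, dist_eq_norm, Finset.mul_sum, Finset.mul_sum, ← Finset.sum_sub_distrib]
  have key : ∀ l ∈ Finset.range K,
      ‖n⁻¹ * (h (((l + 1 : ℕ) : ℝ) / n) * g (l + 1)) -
        L * ∫ x in ((l : ℝ) / n)..(((l + 1 : ℕ) : ℝ) / n), h x‖ ≤ (M + |L|) * δ * n⁻¹ := by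
    intro l _
    set y := ((l + 1 : ℕ) : ℝ) / n with hy
    have hlen : y - (l : ℝ) / n = n⁻¹ := by
      rw [hy]; push_cast; field_simp; ring
    have e3 : n⁻¹ * (h y * g (l + 1)) - L * ∫ x in ((l : ℝ) / n)..y, h x
        = ∫ x in ((l : ℝ) / n)..y, (h y * g (l + 1) - L * h x) := by
      rw [intervalIntegral.integral_sub (by simp) ((hc.const_mul L).intervalIntegrable _ _),
        intervalIntegral.integral_const, intervalIntegral.integral_const_mul, hlen, smul_eq_mul]
    rw [e3]
    have hpos : 0 < n⁻¹ := by positivity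
    have := intervalIntegral.norm_integral_le_of_norm_le_const (a := (l : ℝ) / n) (b := y)
      (f := fun x => h y * g (l + 1) - L * h x) (C := (M + |L|) * δ) ?_
    · rwa [hlen, abs_of_pos hpos] at this
    intro x hx
    rw [Set.uIoc_of_le (by linarith)] at hx
    have hxy : |h y - h x| ≤ δ := by
      have : dist y x < η := by
        rw [Real.dist_eq, abs_of_nonneg (by linarith [hx.2])]
        linarith [hx.1]
      exact (hhη this).le
    have hyg : |h y| * |g (l + 1) - L| ≤ M * δ := by
      by_cases hy1 : y ∈ Set.Icc 1 B
      · have h1 : n ≤ ((l + 1 : ℕ) : ℝ) := by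
          have := hy1.1
          rwa [hy, le_div_iff₀ hn, one_mul] at this
        have h2 : l₀ ≤ l + 1 := by exact_mod_cast hNl.trans h1
        exact mul_le_mul (hM y) (hl₀ _ h2).le (abs_nonneg _) hM0
      · rw [h0 y hy1, abs_zero, zero_mul]
        positivity
    calc ‖h y * g (l + 1) - L * h x‖ = |h y * (g (l + 1) - L) + L * (h y - h x)| := by
          rw [Real.norm_eq_abs]; ring_nf
      _ ≤ |h y| * |g (l + 1) - L| + |L| * |h y - h x| := by
          rw [← abs_mul, ← abs_mul]; exact abs_add_le _ _
      _ ≤ M * δ + |L| * δ := by gcongr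
      _ = (M + |L|) * δ := by ring
  have hsum := norm_sum_le_of_le _ key
  refine hsum.trans_lt ?_
  rw [Finset.sum_const, Finset.card_range, nsmul_eq_mul]
  have hKn : (K : ℝ) * n⁻¹ ≤ B + 1 := by
    rwa [← div_eq_mul_inv, div_le_iff₀ hn]
  calc (K : ℝ) * ((M + |L|) * δ * n⁻¹) = ((M + |L|) * δ) * (K * n⁻¹) := by ring
    _ ≤ ((M + |L| + 1) * δ) * (B + 1) :=
        mul_le_mul (mul_le_mul_of_nonneg_right (by linarith) hδ0.le) hKn (by positivity)
          (by positivity)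
    _ = ε / 2 := by rw [hδ]; field_simp
    _ < ε := by linarith

theorem needlet_covariance_limit (B : ℝ) (hB : 1 < B) (b : ℝ → ℝ) (hb : Continuous b)
    (hsupp : Function.support b ⊆ Set.Icc B⁻¹ B)
    (α₀ G₀ : ℝ) (G : ℕ → ℝ) (hG : Tendsto G atTop (𝓝 G₀)) :
    Tendsto (fun j : ℕ =>
      2 * B ^ ((2 * α₀ - 2) * (j : ℝ)) *
        ∑' l : ℕ+, (b ((l : ℝ) / B ^ (j : ℕ))) ^ 2 * (b ((l : ℝ) / B ^ (j + 1 : ℕ))) ^ 2 *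
          (2 * (l : ℝ) + 1) * ((l : ℝ) ^ (-α₀) * G l) ^ 2)
      atTop (𝓝 (4 * G₀ ^ 2 * ∫ x in (1 : ℝ)..B, (b x) ^ 2 * (b (x / B)) ^ 2 * x ^ (1 - 2 * α₀))) := by
  have hB0 : 0 < B := by linarith
  -- Replacing `x` by `max x 1` in the power changes nothing on `[1, B]` and makes `h` continuous
  -- on the whole line.
  set h : ℝ → ℝ := fun x => (b x) ^ 2 * (b (x / B)) ^ 2 * (max x 1) ^ (1 - 2 * α₀) with hh
  have hmem : ∀ x, b x ≠ 0 → b (x / B) ≠ 0 → x ∈ Set.Icc 1 B := by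
    intro x h1 h2
    have h3 := (hsupp h2).1
    rw [le_div_iff₀ hB0, inv_mul_cancel₀ hB0.ne'] at h3
    exact ⟨h3, (hsupp h1).2⟩
  have hheq : ∀ x, h x = (b x) ^ 2 * (b (x / B)) ^ 2 * x ^ (1 - 2 * α₀) := by
    intro x
    by_cases h1 : b x = 0
    · simp [hh, h1]
    by_cases h2 : b (x / B) = 0
    · simp [hh, h2]
    simp only [hh, max_eq_left (hmem x h1 h2).1]
  have hc : Continuous h := by
    have h1 : Continuous fun x : ℝ => (max x 1) ^ (1 - 2 * α₀) :=
      (continuous_id.max continuous_const).rpow_const fun x =>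
        Or.inl (by simp only [id]; positivity)
    have h2 : Continuous fun x : ℝ => b (x / B) := hb.comp (continuous_id.div_const B)
    exact ((hb.pow 2).mul (h2.pow 2)).mul h1
  have hs : Function.support h ⊆ Set.Icc 1 B := by
    intro x hx
    apply hmem <;> intro h1 <;> exact hx (by simp [hh, h1])
  have hg : Tendsto (fun l : ℕ => G l ^ 2 * (4 + 2 / (l : ℝ))) atTop (𝓝 (4 * G₀ ^ 2)) := by
    have := (hG.pow 2).mul ((tendsto_const_div_atTop_nhds_zero_nat (2 : ℝ)).const_add 4)
    convert this using 2
    ring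
  have main := tendsto_weighted_riemann_sum hB hc hs hg (tendsto_pow_atTop_atTop_of_one_lt hB)
  simp only [hheq] at main
  refine main.congr fun j => ?_
  rw [← tsum_mul_left, ← tsum_mul_left]
  refine tsum_congr fun l => ?_
  have hl : (0 : ℝ) < (l : ℝ) := by exact_mod_cast l.pos
  set N := B ^ j with hN
  have hN0 : 0 < N := by positivity
  have e1 : B ^ ((2 * α₀ - 2) * (j : ℝ)) = N ^ (2 * α₀) / N ^ 2 := by
    rw [mul_comm, Real.rpow_mul hB0.le, Real.rpow_natCast, Real.rpow_sub hN0]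
    norm_num
  have e2 : (l : ℝ) / B ^ (j + 1) = l / N / B := by
    rw [pow_succ, div_div]
  have e3 : ((l : ℝ) / N) ^ (1 - 2 * α₀) = l / N * (N ^ (2 * α₀) / (l : ℝ) ^ (2 * α₀)) := by
    rw [Real.rpow_sub (by positivity), Real.rpow_one, Real.div_rpow hl.le hN0.le]
    field_simp
  have e4 : ((l : ℝ) ^ (-α₀) * G l) ^ 2 = G l ^ 2 / (l : ℝ) ^ (2 * α₀) := by
    rw [Real.rpow_neg hl.le, two_mul, Real.rpow_add hl]
    field_simp
  rw [e1, e2, e3, e4]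
  field_simp
  ring
end
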